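/- arXiv:2207.08440 — 4 statements merged into one kernel-verified Lean document; each statement's English description precedes it below -/
import Mathlib

section
/- Let N ≥ 2, r ∈ (0, N/(N+1)], β = 2/(((N+1)/N)r + 1), and let ε > 0 be sufficiently small and s ≥ 0. There exist constants c > 0, C > 0 and R₀ > 1, independent of R, such that for every R ≥ R₀ the following holds: let I = [R^{-β(r+1)}, R^{-β}) and let {t_j : 1 ≤ j ≤ j₀} = R^{-β(r+1)}ℤ ∩ I with t_j − t_{j+1} = R^{-β(r+1)} for 1 ≤ j ≤ j₀−1. Then there exists f ∈ L²(ℝ^N) with supp f̂ ⊂ B(0, 2R) such that ‖ sup_{1 ≤ j ≤ j₀} |e^{i (t_j/(2π)) Δ} f| ‖_{L²(B(0,1))} ≥ c · R^{(1-β)/2} · R^{β/2} · R^{(N-1)(1 - (r+1)β/2) - ε}, and ‖f‖_{H^s(ℝ^N)} ≤ C · R^{s} · R^{β/4} · R^{((N-1)/2)(1 - (r+1)β/2)}. -/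
/-!
Write `N = n + 1` and `κ = 1 - (r + 1)β/2 > 0`; the choice of `β` means exactly that
`nκ + 1 - β(r + 1) + β/2 = 0`. Let `T = R^{-β(r+1)}` be the spacing of the times,
`D = T^{-1/2} = R^{1-κ}`, and `B = R^{β/2}`. The datum is `f̂ = 𝟙_S`, where `S` is a box: the first
factor is an interval of length `~ B` at `-R`, and each of the other `n` factors is a comb of
`~ R^κ` intervals of length `~ 1` at the points `2πD(l + αᵢ)`, with `αᵢ = 1/(2qⁱ)` and `q ~ R^κ`.
Then `|S| ~ R^{β/2 + nκ}`, which gives the Sobolev bound at once.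

At time `t/(2π)` with `t = mT`, the quadratic part of the phase on the `i`-th comb is `2πml²` plus
a constant plus `2πl · 2αᵢm`: the first term is invisible and the last one only translates `D xᵢ`
to `D xᵢ + m/qⁱ`. The evolution therefore has no cancellation (`evol_lower`), and its modulus is at
least `|S|/2`, as soon as every `D xᵢ + m/qⁱ` is within `1/q` of an integer and `x₀` is within `1/B`
of `tR/π`. The second condition leaves a window of about `1/(RTB) = R^{nκ} ≥ qⁿ` consecutive `m`,
by the identity for `β`; in any `qⁿ` consecutive integers there is one satisfying the first
condition, since its base-`q` digits can be chosen freely (`exists_digits`). So the maximal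
function is at least `|S|/2` whenever `x₀ ~ R^{1-β}` and the other coordinates are in a fixed
interval, a set of measure `~ R^{1-β}`. This is the lower bound, even without the loss `R^{-ε}`.
-/


open MeasureTheory Real Filter

noncomputable section

/-- The Schrödinger evolution `e^{itΔ}f`, expressed through the Fourier transform
`fhat` of the initial datum:  `e^{itΔ}f(x) = ∫ e^{i(x·ξ + t|ξ|²)} f̂(ξ) dξ`. -/
def schrodingerEvol {N : ℕ} (fhat : EuclideanSpace ℝ (Fin N) → ℂ) (t : ℝ)
    (x : EuclideanSpace ℝ (Fin N)) : ℂ :=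
  ∫ ξ : EuclideanSpace ℝ (Fin N),
    Complex.exp (Complex.I * (((∑ i, x i * ξ i) + t * ‖ξ‖ ^ 2 : ℝ) : ℂ)) * fhat ξ

/-- The squared `H^s` norm, expressed through the Fourier transform. -/
def sobolevNormSq {N : ℕ} (s : ℝ) (fhat : EuclideanSpace ℝ (Fin N) → ℂ) : ℝ :=
  ∫ ξ : EuclideanSpace ℝ (Fin N), (1 + ‖ξ‖ ^ 2) ^ s * ‖fhat ξ‖ ^ 2

/-! ### Boxes and combs -/

/-- The coordinate box `{x | ∀ i, x i ∈ E i}` in Euclidean space. -/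
def coordBox {ι : Type*} (E : ι → Set ℝ) : Set (EuclideanSpace ℝ ι) := {x | ∀ i, x i ∈ E i}

/-- The comb of `L` intervals of length `δ` starting at the points `2πD(l + α)`, `0 ≤ l < L`. -/
def comb (D δ α : ℝ) (L : ℕ) : Set ℝ :=
  ⋃ l ∈ Finset.range L, Set.Ico (2 * π * D * (l + α)) (2 * π * D * (l + α) + δ)

lemma measurableSet_coordBox {ι : Type*} [Fintype ι] {E : ι → Set ℝ}
    (hE : ∀ i, MeasurableSet (E i)) : MeasurableSet (coordBox E) := by
  have : coordBox E = ⋂ i, (fun x : EuclideanSpace ℝ ι => x i) ⁻¹' (E i) := by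
    ext x; simp [coordBox]
  rw [this]
  exact MeasurableSet.iInter fun i =>
    (by fun_prop : Measurable fun x : EuclideanSpace ℝ ι => x i) (hE i)

lemma volume_coordBox {ι : Type*} [Fintype ι] {E : ι → Set ℝ}
    (hE : ∀ i, MeasurableSet (E i)) : volume (coordBox E) = ∏ i, volume (E i) := by
  have h := (PiLp.volume_preserving_ofLp ι).measure_preimage
    (MeasurableSet.univ_pi hE).nullMeasurableSet
  rw [volume_pi_pi] at h
  rw [← h]
  congr 1
  ext x; simp [coordBox]

lemma measurableSet_comb (D δ α : ℝ) (L : ℕ) : MeasurableSet (comb D δ α L) :=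
  Finset.measurableSet_biUnion _ fun _ _ => measurableSet_Ico

lemma volume_comb {D δ : ℝ} (α : ℝ) (L : ℕ) (hδ : 0 ≤ δ) (hD : δ ≤ 2 * π * D) :
    volume (comb D δ α L) = ENNReal.ofReal (L * δ) := by
  unfold comb
  rw [measure_biUnion_finset]
  · simp only [Real.volume_Ico, add_sub_cancel_left, Finset.sum_const, Finset.card_range]
    rw [ENNReal.ofReal_mul (by positivity), nsmul_eq_mul, ENNReal.ofReal_natCast]
  · intro a _ b _ hab
    have key : ∀ a b : ℕ, a < b → 2 * π * D * (a + α) + δ ≤ 2 * π * D * (b + α) := by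
      intro a b h
      have h1 : (a : ℝ) + 1 ≤ b := by exact_mod_cast h
      nlinarith [mul_le_mul_of_nonneg_left h1 (hδ.trans hD)]
    rw [Function.onFun, Set.disjoint_left]
    intro y hy hy'
    rcases lt_or_gt_of_ne hab with h | h
    · linarith [key _ _ h, hy.2, hy'.1]
    · linarith [key _ _ h, hy'.2, hy.1]
  · exact fun _ _ => measurableSet_Ico

/-! ### Evolution of the indicator of a frequency set -/

/-- If the phase stays within `1` of a constant modulo `2π` on `S`, there is no cancellation in
the evolution of the datum with Fourier transform `𝟙_S`. -/
lemma evol_lower {N : ℕ} {S : Set (EuclideanSpace ℝ (Fin N))} (hS : MeasurableSet S)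
    (hfin : volume S ≠ ⊤) (t : ℝ) (x : EuclideanSpace ℝ (Fin N)) (c : ℝ)
    (h : ∀ ξ ∈ S, ∃ k : ℤ, |(∑ i, x i * ξ i) + t * ‖ξ‖ ^ 2 - c - 2 * π * k| ≤ 1) :
    volume.real S / 2 ≤ ‖schrodingerEvol (S.indicator fun _ => 1) t x‖ := by
  set φ : EuclideanSpace ℝ (Fin N) → ℝ := fun ξ => (∑ i, x i * ξ i) + t * ‖ξ‖ ^ 2 with hφ
  have hcont : Continuous φ := by fun_prop
  have e1 : schrodingerEvol (S.indicator fun _ => 1) t x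
      = ∫ ξ in S, Complex.exp (Complex.I * (φ ξ : ℂ)) := by
    rw [← integral_indicator hS]
    unfold schrodingerEvol
    congr 1
    ext ξ
    by_cases hξ : ξ ∈ S <;> simp [hξ, hφ]
  have hint : IntegrableOn (fun ξ => Complex.exp (Complex.I * ((φ ξ - c : ℝ) : ℂ))) S := by
    refine Measure.integrableOn_of_bounded (M := 1) hfin (by fun_prop) ?_
    refine Eventually.of_forall fun ξ => ?_
    rw [mul_comm, Complex.norm_exp_ofReal_mul_I]
  have e2 : ‖schrodingerEvol (S.indicator fun _ => 1) t x‖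
      = ‖∫ ξ in S, Complex.exp (Complex.I * ((φ ξ - c : ℝ) : ℂ))‖ := by
    have : ∀ ξ, Complex.exp (Complex.I * ((φ ξ - c : ℝ) : ℂ))
        = Complex.exp (((-c : ℝ) : ℂ) * Complex.I) * Complex.exp (Complex.I * (φ ξ : ℂ)) := by
      intro ξ
      rw [← Complex.exp_add]
      congr 1
      push_cast
      ring
    simp_rw [this]
    rw [integral_const_mul, norm_mul, Complex.norm_exp_ofReal_mul_I, one_mul, e1]
  rw [e2]
  refine le_trans ?_ (Complex.re_le_norm _)
  have e3 : (∫ ξ in S, Complex.exp (Complex.I * ((φ ξ - c : ℝ) : ℂ))).re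
      = ∫ ξ in S, Real.cos (φ ξ - c) := by
    have := integral_re hint
    simp only [RCLike.re_to_complex] at this
    rw [← this]
    congr 1
    ext ξ
    rw [mul_comm, Complex.exp_ofReal_mul_I_re]
  rw [e3]
  have hcosint : IntegrableOn (fun ξ => Real.cos (φ ξ - c)) S := by
    refine Measure.integrableOn_of_bounded (M := 1) hfin (by fun_prop) ?_
    exact Eventually.of_forall fun ξ => Real.abs_cos_le_one _
  calc volume.real S / 2 = ∫ ξ in S, (1 / 2 : ℝ) := by simp; ring
    _ ≤ _ := by
      refine setIntegral_mono_on (integrableOn_const hfin) hcosint hS fun ξ hξ => ?_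
      obtain ⟨k, hk⟩ := h ξ hξ
      rw [← Real.cos_sub_int_mul_two_pi _ k]
      have h2 := Real.one_sub_sq_div_two_le_cos (x := φ ξ - c - k * (2 * π))
      have h3 : |φ ξ - c - k * (2 * π)| ≤ 1 := by rw [mul_comm (k : ℝ)]; exact hk
      have := (sq_le_one_iff_abs_le_one _).2 h3
      linarith

lemma continuous_evol {N : ℕ} {S : Set (EuclideanSpace ℝ (Fin N))} (hS : MeasurableSet S)
    (hfin : volume S ≠ ⊤) (t : ℝ) :
    Continuous (schrodingerEvol (S.indicator fun _ => 1) t) := by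
  have hi : Integrable (S.indicator fun _ => (1 : ℂ)) volume :=
    (integrable_indicator_iff hS).2 (integrableOn_const hfin)
  unfold schrodingerEvol
  refine continuous_of_dominated (bound := fun ξ => ‖S.indicator (fun _ => (1 : ℂ)) ξ‖)
    ?_ ?_ hi.norm ?_
  · intro x
    exact (by fun_prop : Continuous _).aestronglyMeasurable.mul hi.1
  · intro x
    refine Eventually.of_forall fun ξ => ?_
    rw [norm_mul, mul_comm Complex.I, Complex.norm_exp_ofReal_mul_I, one_mul]
  · exact Eventually.of_forall fun ξ => by fun_prop

lemma norm_evol_le {N : ℕ} {S : Set (EuclideanSpace ℝ (Fin N))} (hS : MeasurableSet S)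
    (t : ℝ) (x : EuclideanSpace ℝ (Fin N)) :
    ‖schrodingerEvol (S.indicator fun _ => 1) t x‖ ≤ volume.real S := by
  refine (norm_integral_le_integral_norm _).trans (le_of_eq ?_)
  have : ∀ ξ : EuclideanSpace ℝ (Fin N),
      ‖Complex.exp (Complex.I * (((∑ i, x i * ξ i) + t * ‖ξ‖ ^ 2 : ℝ) : ℂ))
        * S.indicator (fun _ => 1) ξ‖ = S.indicator (fun _ => (1 : ℝ)) ξ := by
    intro ξ
    rw [norm_mul, mul_comm Complex.I, Complex.norm_exp_ofReal_mul_I, one_mul]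
    by_cases h : ξ ∈ S <;> simp [h]
  simp_rw [this]
  rw [integral_indicator_const _ hS]
  simp

/-- A lower bound for the maximal function on a set `G` gives a lower bound for its `L²` norm. -/
lemma sup_lower {N : ℕ} {S G : Set (EuclideanSpace ℝ (Fin N))} (hS : MeasurableSet S)
    (hfin : volume S ≠ ⊤) (hG : MeasurableSet G) (hGb : G ⊆ Metric.ball 0 1) (j₀ : ℕ) (τ : ℕ → ℝ)
    (v : ℝ) (hv : 0 ≤ v)
    (h : ∀ x ∈ G, ∃ j ∈ Set.Icc 1 j₀, v ≤ ‖schrodingerEvol (S.indicator fun _ => 1) (τ j) x‖) :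
    v * √(volume.real G) ≤ √(∫ x in Metric.ball (0 : EuclideanSpace ℝ (Fin N)) 1,
      (⨆ j ∈ Set.Icc 1 j₀, ‖schrodingerEvol (S.indicator fun _ => 1) (τ j) x‖) ^ 2) := by
  set u : ℕ → EuclideanSpace ℝ (Fin N) → ℝ := fun j x =>
    ‖schrodingerEvol (S.indicator fun _ => 1) (τ j) x‖ with hu
  have hum : ∀ j, Measurable (u j) := fun j => (continuous_evol hS hfin (τ j)).norm.measurable
  have hub : ∀ j x, u j x ≤ volume.real S := fun j x => norm_evol_le hS _ _
  have hu0 : ∀ j x, 0 ≤ u j x := fun j x => norm_nonneg _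
  have hin : ∀ j x, (⨆ (_ : j ∈ Set.Icc 1 j₀), u j x) ≤ volume.real S := fun j x =>
    Real.iSup_le (fun _ => hub j x) measureReal_nonneg
  have hbdd : ∀ x, BddAbove (Set.range fun j => ⨆ (_ : j ∈ Set.Icc 1 j₀), u j x) := by
    rintro x
    refine ⟨volume.real S, ?_⟩
    rintro _ ⟨j, rfl⟩
    exact hin j x
  have hle : ∀ x, (⨆ j ∈ Set.Icc 1 j₀, u j x) ≤ volume.real S := fun x =>
    Real.iSup_le (fun j => hin j x) measureReal_nonneg
  have h0 : ∀ x, 0 ≤ (⨆ j ∈ Set.Icc 1 j₀, u j x) := fun x =>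
    Real.iSup_nonneg fun j => Real.iSup_nonneg fun _ => hu0 j x
  -- the bounds above matter: without them the suprema and the integral could take the value `0`
  have hmeas : Measurable fun x => ⨆ j ∈ Set.Icc 1 j₀, u j x := by
    refine Measurable.iSup fun j => ?_
    by_cases hj : j ∈ Set.Icc 1 j₀
    · simpa [hj] using hum j
    · simp [hj]
  have hInt : IntegrableOn (fun x => (⨆ j ∈ Set.Icc 1 j₀, u j x) ^ 2)
      (Metric.ball (0 : EuclideanSpace ℝ (Fin N)) 1) := by
    refine Measure.integrableOn_of_bounded (M := (volume.real S) ^ 2)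
      measure_ball_lt_top.ne (hmeas.pow_const 2).aestronglyMeasurable ?_
    refine Eventually.of_forall fun x => ?_
    rw [Real.norm_of_nonneg (sq_nonneg _)]
    exact pow_le_pow_left₀ (h0 x) (hle x) 2
  have hGfin : volume G ≠ ⊤ := ((measure_mono hGb).trans_lt measure_ball_lt_top).ne
  apply Real.le_sqrt_of_sq_le
  rw [mul_pow, Real.sq_sqrt measureReal_nonneg]
  calc v ^ 2 * volume.real G = ∫ x in G, v ^ 2 := by simp; ring
    _ ≤ ∫ x in G, (⨆ j ∈ Set.Icc 1 j₀, u j x) ^ 2 := by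
      refine setIntegral_mono_on (integrableOn_const hGfin) (hInt.mono_set hGb) hG fun x hx => ?_
      obtain ⟨j, hj, hvj⟩ := h x hx
      refine pow_le_pow_left₀ hv (hvj.trans ?_) 2
      refine le_trans ?_ (le_ciSup (hbdd x) j)
      simp [hj, hu]
    _ ≤ _ := setIntegral_mono_set hInt (Eventually.of_forall fun x => sq_nonneg _)
        (Eventually.of_forall hGb)

/-! ### Equidistribution by digits -/

/-- The points `(m/q, m/q², …, m/qⁿ)`, for `m` in any window of `qⁿ` consecutive integers, are
`1/q`-dense modulo `1`: the base-`q` digits of `m` can be chosen one at a time. -/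
lemma exists_digits (q : ℕ) (hq : 0 < q) (y : ℕ → ℝ) (n : ℕ) (m₀ : ℤ) :
    ∃ m : ℤ, m₀ ≤ m ∧ m < m₀ + (q : ℤ) ^ n ∧
      ∀ i < n, ∃ p : ℤ, |(m : ℝ) / (q : ℝ) ^ (i + 1) + y i - p| ≤ 1 / q := by
  have hqR : (0 : ℝ) < q := by exact_mod_cast hq
  have hqZ : (0 : ℤ) < q := by exact_mod_cast hq
  induction n with
  | zero => exact ⟨m₀, le_rfl, by simp, by simp⟩
  | succ n ih =>
    obtain ⟨m', h1, h2, h3⟩ := ih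
    -- adding `j qⁿ` to `m'` keeps the first `n` conditions; `j` is the residue modulo `q` that
    -- brings the last coordinate within `1/q` of an integer
    set z : ℝ := q * ((m' : ℝ) / (q : ℝ) ^ (n + 1) + y n) with hz
    set j : ℤ := (-⌊z⌋) % q with hj
    have hj0 : 0 ≤ j := Int.emod_nonneg _ hqZ.ne'
    have hj1 : j + 1 ≤ q := Int.emod_lt_of_pos _ hqZ
    have hpow : (0 : ℤ) < (q : ℤ) ^ n := by positivity
    refine ⟨m' + j * (q : ℤ) ^ n, by nlinarith, ?_, ?_⟩
    · rw [pow_succ]; nlinarith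
    · intro i hi
      rcases Nat.lt_succ_iff_lt_or_eq.1 hi with h | h
      · obtain ⟨p, hp⟩ := h3 i h
        refine ⟨p + j * (q : ℤ) ^ (n - (i + 1)), ?_⟩
        have : (q : ℝ) ^ n = q ^ (i + 1) * q ^ (n - (i + 1)) := by
          rw [← pow_add]; congr 1; omega
        convert hp using 2
        push_cast
        rw [this]
        field_simp
        ring
      · subst h
        set d : ℤ := (-⌊z⌋) / q with hd
        have hdj : (q : ℤ) * d + j = -⌊z⌋ := Int.mul_ediv_add_emod _ _
        have hdjR : (q : ℝ) * d + j = -(⌊z⌋ : ℝ) := by exact_mod_cast hdj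
        refine ⟨-d, ?_⟩
        have e : ((m' + j * (q : ℤ) ^ i : ℤ) : ℝ) / (q : ℝ) ^ (i + 1) + y i - ((-d : ℤ) : ℝ)
            = (z - ⌊z⌋) / q := by
          rw [sub_eq_add_neg z, ← hdjR, hz]
          push_cast
          field_simp
          ring
        rw [e, abs_of_nonneg (div_nonneg (sub_nonneg.2 (Int.floor_le z)) hqR.le)]
        gcongr
        linarith [Int.lt_floor_add_one z]

/-! ### Stationarity of the phase -/

/-- On the first frequency interval the phase is stationary at the space-time points near the ray
`x = tR/π`. -/
lemma phase_first {R B K t x ξ : ℝ} (hB : 0 < B) (hK : 1 ≤ K) (ht : 0 ≤ t) (htB : t * B ^ 2 ≤ 1)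
    (hx : |x - t * R / π| ≤ 1 / B) (hξ : ξ ∈ Set.Ico (-R) (-R + B / K)) :
    |x * ξ + t / (2 * π) * ξ ^ 2 - (-x * R + t / (2 * π) * R ^ 2)| ≤ 2 / K := by
  obtain ⟨η, rfl⟩ : ∃ η, ξ = -R + η := ⟨ξ + R, by ring⟩
  have h0 : 0 ≤ η := by linarith [hξ.1]
  have h1 : η ≤ B / K := by linarith [hξ.2]
  have hK0 : 0 < K := by linarith
  have hpi := Real.pi_gt_three
  have e : x * (-R + η) + t / (2 * π) * (-R + η) ^ 2 - (-x * R + t / (2 * π) * R ^ 2)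
      = η * (x - t * R / π) + t * η ^ 2 / (2 * π) := by
    field_simp; ring
  rw [e]
  have a1 : |η * (x - t * R / π)| ≤ 1 / K := by
    rw [abs_mul, abs_of_nonneg h0]
    calc η * |x - t * R / π| ≤ B / K * (1 / B) := by gcongr
      _ = 1 / K := by field_simp
  have a2 : |t * η ^ 2 / (2 * π)| ≤ 1 / K := by
    rw [abs_of_nonneg (by positivity)]
    calc t * η ^ 2 / (2 * π) ≤ t * η ^ 2 / 1 := by gcongr; linarith
      _ ≤ t * (B / K) ^ 2 / 1 := by gcongr
      _ = t * B ^ 2 / K ^ 2 := by ring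
      _ ≤ 1 / K ^ 2 := by gcongr
      _ ≤ 1 / K := by gcongr; nlinarith
  calc _ ≤ _ := abs_add_le _ _
    _ ≤ 1 / K + 1 / K := add_le_add a1 a2
    _ = 2 / K := by ring

/-- At the times `t = m/D²` the quadratic phases on the comb are integer multiples of `2π`, and the
offset `α` of the comb turns into the translation `Dx ↦ Dx + 2αm`. -/
lemma phase_comb {D K α t x ξ : ℝ} {q L : ℕ} {m p : ℤ} (hD : 0 < D) (hK : 1 ≤ K)
    (hα0 : 0 ≤ α) (hα1 : α ≤ 1) (hq : 0 < q) (hLq : K * L ≤ q) (ht : 0 ≤ t) (ht1 : t ≤ 1)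
    (htm : t * D ^ 2 = m) (htL : t * (D * L) ≤ 1) (hx : |x| ≤ 1)
    (hp : |2 * α * m + D * x - p| ≤ 1 / q) (hξ : ξ ∈ comb D (1 / K) α L) :
    ∃ k : ℤ, |x * ξ + t / (2 * π) * ξ ^ 2 - (2 * π * D * α * x + 2 * π * m * α ^ 2)
      - 2 * π * k| ≤ 11 / K := by
  simp only [comb, Set.mem_iUnion, Finset.mem_range] at hξ
  obtain ⟨l, hl, hξ⟩ := hξ
  obtain ⟨η, rfl⟩ : ∃ η, ξ = 2 * π * D * (l + α) + η := ⟨ξ - 2 * π * D * (l + α), by ring⟩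
  have h0 : 0 ≤ η := by linarith [hξ.1]
  have h1 : η ≤ 1 / K := by linarith [hξ.2]
  have hK0 : 0 < K := by linarith
  have hqR : (0 : ℝ) < q := by exact_mod_cast hq
  have hK1 : 1 / K ≤ 1 := by rw [div_le_one hK0]; exact hK
  have hlL : (l : ℝ) + 1 ≤ L := by exact_mod_cast hl
  have hpi := Real.pi_gt_three
  have hpi' := Real.pi_lt_d2
  refine ⟨m * l ^ 2 + l * p, ?_⟩
  have e : x * (2 * π * D * (l + α) + η) + t / (2 * π) * (2 * π * D * (l + α) + η) ^ 2
      - (2 * π * D * α * x + 2 * π * m * α ^ 2) - 2 * π * ((m * l ^ 2 + l * p : ℤ) : ℝ)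
      = 2 * π * l * (2 * α * m + D * x - p) + x * η + 2 * (t * (D * (l + α)) * η)
        + t * η ^ 2 / (2 * π) := by
    push_cast
    rw [← htm]
    field_simp
    ring
  rw [e]
  have a1 : |2 * π * l * (2 * α * m + D * x - p)| ≤ 7 / K := by
    rw [abs_mul, abs_of_nonneg (by positivity : 0 ≤ 2 * π * (l : ℝ))]
    calc 2 * π * l * |2 * α * m + D * x - p| ≤ 7 * L * (1 / q) := by
          gcongr
          linarith
      _ = 7 * L / q := by ring
      _ ≤ 7 / K := by
        rw [div_le_div_iff₀ hqR hK0]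
        nlinarith
  have a2 : |x * η| ≤ 1 / K := by
    rw [abs_mul, abs_of_nonneg h0]
    calc |x| * η ≤ 1 * (1 / K) := by gcongr
      _ = _ := one_mul _
  have a3 : |2 * (t * (D * (l + α)) * η)| ≤ 2 / K := by
    rw [abs_of_nonneg (by positivity)]
    calc 2 * (t * (D * (l + α)) * η) ≤ 2 * (t * (D * L) * (1 / K)) := by
          gcongr; linarith
      _ ≤ 2 * (1 * (1 / K)) := by gcongr
      _ = 2 / K := by ring
  have a4 : |t * η ^ 2 / (2 * π)| ≤ 1 / K := by
    rw [abs_of_nonneg (by positivity)]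
    calc t * η ^ 2 / (2 * π) ≤ t * η ^ 2 / 1 := by gcongr; linarith
      _ ≤ 1 * η ^ 2 / 1 := by gcongr
      _ = η * η := by ring
      _ ≤ (1 / K) * 1 := by gcongr; linarith
      _ = 1 / K := mul_one _
  refine (abs_add_le _ _).trans ((add_le_add ((abs_add_le _ _).trans
    (add_le_add ((abs_add_le _ _).trans (add_le_add a1 a2)) a3)) a4).trans (le_of_eq ?_))
  ring

/-- Coordinatewise control of the phase on a box gives control of the full phase. -/
lemma phase_box {N : ℕ} {E : Fin N → Set ℝ} {t δ : ℝ} {x : EuclideanSpace ℝ (Fin N)}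
    (hδ : N * δ ≤ 1)
    (h : ∀ i, ∃ c : ℝ, ∀ ξ ∈ E i, ∃ k : ℤ, |x i * ξ + t * ξ ^ 2 - c - 2 * π * k| ≤ δ) :
    ∃ c : ℝ, ∀ ξ ∈ coordBox E, ∃ k : ℤ,
      |(∑ i, x i * ξ i) + t * ‖ξ‖ ^ 2 - c - 2 * π * k| ≤ 1 := by
  choose c hc using h
  refine ⟨∑ i, c i, fun ξ hξ => ?_⟩
  choose k hk using fun i => hc i (ξ i) (hξ i)
  refine ⟨∑ i, k i, ?_⟩
  have e : (∑ i, x i * ξ i) + t * ‖ξ‖ ^ 2 - ∑ i, c i - 2 * π * ((∑ i, k i : ℤ) : ℝ)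
      = ∑ i, (x i * ξ i + t * ξ i ^ 2 - c i - 2 * π * k i) := by
    rw [EuclideanSpace.real_norm_sq_eq]
    push_cast
    simp only [Finset.sum_sub_distrib, Finset.sum_add_distrib, Finset.mul_sum]
  rw [e]
  calc _ ≤ _ := Finset.abs_sum_le_sum_abs _ _
    _ ≤ ∑ _i : Fin N, δ := Finset.sum_le_sum fun i _ => hk i
    _ ≤ 1 := by simpa using hδ

/-! ### The frequency support and the large set -/

/-- The factors of the frequency support in dimension `n + 1`: one interval of length `B/K` at
`-R`, and `n` combs with the offsets `1/(2qⁱ)`, `1 ≤ i ≤ n`. -/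
def freqFactor (n : ℕ) (R B D K : ℝ) (q L : ℕ) : Fin (n + 1) → Set ℝ :=
  Fin.cons (Set.Ico (-R) (-R + B / K))
    (fun i : Fin n => comb D (1 / K) (1 / (2 * (q : ℝ) ^ ((i : ℕ) + 1))) L)

/-- The factors of the set of space points on which the maximal function is large. -/
def spaceFactor (n : ℕ) (ρ : ℝ) : Fin (n + 1) → Set ℝ :=
  Fin.cons (Set.Icc (ρ / 8) (ρ / 4)) (fun _ : Fin n => Set.Icc 0 (1 / ((n : ℝ) + 1)))

lemma measurableSet_freqFactor (n : ℕ) (R B D K : ℝ) (q L : ℕ) (i : Fin (n + 1)) :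
    MeasurableSet (freqFactor n R B D K q L i) := by
  refine Fin.cases ?_ (fun i => ?_) i
  · exact measurableSet_Ico
  · exact measurableSet_comb _ _ _ _

lemma measurableSet_spaceFactor (n : ℕ) (ρ : ℝ) (i : Fin (n + 1)) :
    MeasurableSet (spaceFactor n ρ i) := by
  refine Fin.cases ?_ (fun i => ?_) i
  · exact measurableSet_Icc
  · exact measurableSet_Icc

lemma volume_freq {n : ℕ} {R B D K : ℝ} {q L : ℕ} (hB : 0 ≤ B) (hK : 1 ≤ K) (hD : 1 ≤ D) :
    volume (coordBox (freqFactor n R B D K q L))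
      = ENNReal.ofReal (B / K * (L * (1 / K)) ^ n) := by
  have hK1 : 1 / K ≤ 1 := by rw [div_le_one (by linarith)]; exact hK
  have hpi := Real.pi_gt_three
  have hK0 : 0 < K := by linarith
  rw [volume_coordBox (measurableSet_freqFactor n R B D K q L), Fin.prod_univ_succ]
  simp only [freqFactor, Fin.cons_zero, Fin.cons_succ, Real.volume_Ico]
  simp_rw [volume_comb _ L (by positivity : 0 ≤ 1 / K) (by nlinarith : 1 / K ≤ 2 * π * D)]
  rw [Finset.prod_const, Finset.card_univ, Fintype.card_fin, ← ENNReal.ofReal_pow (by positivity),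
    ← ENNReal.ofReal_mul (by linarith [div_nonneg hB hK0.le])]
  congr 1
  ring

lemma volume_space {n : ℕ} {ρ : ℝ} (hρ : 0 ≤ ρ) :
    volume.real (coordBox (spaceFactor n ρ)) = ρ / 8 * (1 / ((n : ℝ) + 1)) ^ n := by
  rw [measureReal_def, volume_coordBox (measurableSet_spaceFactor n ρ), Fin.prod_univ_succ]
  simp only [spaceFactor, Fin.cons_zero, Fin.cons_succ, Real.volume_Icc]
  rw [Finset.prod_const, Finset.card_univ, Fintype.card_fin, 
    ← ENNReal.ofReal_pow (by simp; positivity), ← ENNReal.ofReal_mul (by linarith), ENNReal.toReal_ofReal]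
  · ring
  · exact mul_nonneg (by linarith) (pow_nonneg (by simp; positivity) _)

lemma norm_lt_of_coord {n : ℕ} {x : EuclideanSpace ℝ (Fin (n + 1))} {a b r : ℝ} (hr : 0 < r)
    (h0 : |x 0| ≤ a) (hs : ∀ i : Fin n, |x i.succ| ≤ b) (h : a ^ 2 + n * b ^ 2 < r ^ 2) :
    x ∈ Metric.ball (0 : EuclideanSpace ℝ (Fin (n + 1))) r := by
  rw [mem_ball_zero_iff]
  refine lt_of_pow_lt_pow_left₀ 2 hr.le ?_
  rw [EuclideanSpace.real_norm_sq_eq, Fin.sum_univ_succ]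
  refine lt_of_le_of_lt (add_le_add (sq_le_sq' (abs_le.1 h0).1 (abs_le.1 h0).2)
    (Finset.sum_le_sum (g := fun _ : Fin n => b ^ 2) fun i _ =>
      sq_le_sq' (abs_le.1 (hs i)).1 (abs_le.1 (hs i)).2)) ?_
  simpa using h

lemma space_subset {n : ℕ} {ρ : ℝ} (hρ0 : 0 ≤ ρ) (hρ : ρ ≤ 1) :
    coordBox (spaceFactor n ρ) ⊆ Metric.ball 0 1 := by
  intro x hx
  have hn : (0 : ℝ) ≤ n := by positivity
  have h0 := hx 0
  simp only [spaceFactor, Fin.cons_zero] at h0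
  refine norm_lt_of_coord (a := 1 / 4) (b := 1 / ((n : ℝ) + 1)) one_pos ?_ (fun i => ?_) ?_
  · rw [abs_le]; constructor <;> linarith [h0.1, h0.2]
  · have hi := hx i.succ
    simp only [spaceFactor, Fin.cons_succ] at hi
    rw [abs_of_nonneg hi.1]; exact hi.2
  · have : (n : ℝ) * (1 / ((n : ℝ) + 1)) ^ 2 ≤ 1 / 2 := by
      rw [one_div, inv_pow, ← div_eq_mul_inv, div_le_div_iff₀ (by positivity) (by norm_num)]
      nlinarith [sq_nonneg (n : ℝ)]
    norm_num at this ⊢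
    linarith

lemma freq_subset {n : ℕ} {R B D K : ℝ} {q L : ℕ} (hq : 0 < q) (hK : K = 100 * ((n : ℝ) + 1))
    (hB : 0 ≤ B) (hBR : B ≤ R) (hD : 1 ≤ D) (hL : 1 ≤ L) (hDL : K * (D * L) ≤ R) :
    coordBox (freqFactor n R B D K q L) ⊆ Metric.ball 0 (2 * R) := by
  intro ξ hξ
  have hn : (0 : ℝ) ≤ n := by positivity
  have hK1 : 100 ≤ K := by rw [hK]; linarith
  have hK0 : 0 < K := by linarith
  have hLR : (1 : ℝ) ≤ L := by exact_mod_cast hL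
  have hDL1 : 1 ≤ D * L := by nlinarith
  have hpi := Real.pi_gt_three
  have hpi' := Real.pi_lt_d2
  have hR : 0 < R := by nlinarith
  have h0 := hξ 0
  simp only [freqFactor, Fin.cons_zero] at h0
  have hBK : B / K ≤ R := (div_le_self hB (by linarith)).trans hBR
  refine norm_lt_of_coord (a := R) (b := R / ((n : ℝ) + 1)) (by positivity) ?_ (fun i => ?_) ?_
  · rw [abs_le]; constructor <;> linarith [h0.1, h0.2]
  · have hi := hξ i.succ
    simp only [freqFactor, Fin.cons_succ, comb, Set.mem_iUnion, Finset.mem_range] at hi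
    obtain ⟨l, hl, h1, h2⟩ := hi
    set α : ℝ := 1 / (2 * (q : ℝ) ^ ((i : ℕ) + 1)) with hα
    have hqR : (1 : ℝ) ≤ q := by exact_mod_cast hq
    have hα0 : 0 ≤ α := by positivity
    have hα1 : α ≤ 1 := by
      rw [hα, div_le_one (by positivity)]
      linarith [one_le_pow₀ hqR (n := (i : ℕ) + 1)]
    have hlL : (l : ℝ) + 1 ≤ L := by exact_mod_cast hl
    have hKi : 1 / K ≤ 1 := by rw [div_le_one hK0]; linarith
    have hpos : 0 ≤ 2 * π * D * (l + α) := by positivity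
    rw [abs_of_nonneg (hpos.trans h1)]
    have b1 : 2 * π * D * (l + α) ≤ 7 * (D * L) := by
      calc 2 * π * D * (l + α) ≤ 7 * D * L := by gcongr <;> linarith
        _ = _ := by ring
    rw [le_div_iff₀ (by positivity)]
    have b2 : ξ i.succ ≤ 8 * (D * L) := by linarith
    calc ξ i.succ * (n + 1) ≤ 8 * (D * L) * (n + 1) := by gcongr
      _ ≤ K * (D * L) := by rw [hK]; nlinarith
      _ ≤ R := hDL
  · have : (n : ℝ) * (R / ((n : ℝ) + 1)) ^ 2 ≤ R ^ 2 := by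
      rw [div_pow, ← mul_div_assoc, div_le_iff₀ (by positivity)]
      nlinarith [sq_nonneg (n : ℝ), sq_nonneg R, mul_nonneg hn (sq_nonneg R),
        mul_nonneg (sq_nonneg (n : ℝ)) (sq_nonneg R)]
    nlinarith

/-! ### Choice of the time and the construction -/

/-- For every space point of the large set some admissible time `mT` makes the phase nearly
constant modulo `2π` on the frequency support. The window `Qⁿ R T = 1/B` is the number of times
during which the first coordinate stays near its ray. -/
lemma exists_time {n : ℕ} {R T D Q B P K : ℝ} {q L : ℕ} (hK : K = 100 * ((n : ℝ) + 1))
    (hT : 0 < T) (hB : 0 < B) (hP : 0 < P) (hD : 1 ≤ D) (hR : 1 ≤ R)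
    (hDT : D ^ 2 * T = 1) (hwin : Q ^ n * R * T * B = 1) (hPB : P * B ^ 2 = 1)
    (hPR : P * R ≤ 1) (hBR : 5 * B ≤ R) (hq : 0 < q) (hqQ : q ≤ Q) (hqL : K * L ≤ q)
    (hDL : D * L ≤ R) {x : EuclideanSpace ℝ (Fin (n + 1))}
    (hx : x ∈ coordBox (spaceFactor n (P * R))) :
    ∃ m : ℤ, (m : ℝ) * T ∈ Set.Ico T P ∧ ∃ c : ℝ,
      ∀ ξ ∈ coordBox (freqFactor n R B D K q L), ∃ k : ℤ,
        |(∑ i, x i * ξ i) + (m * T / (2 * π)) * ‖ξ‖ ^ 2 - c - 2 * π * k| ≤ 1 := by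
  have hn : (0 : ℝ) ≤ n := by positivity
  have hpi := Real.pi_gt_three
  have hpi' := Real.pi_lt_d2
  have hK1 : 1 ≤ K := by rw [hK]; linarith
  have hK0 : 0 < K := by linarith
  have hR0 : 0 < R := by linarith
  have hD0 : 0 < D := by linarith
  have hqR : (1 : ℝ) ≤ q := by exact_mod_cast hq
  have hx0 := hx 0
  simp only [spaceFactor, Fin.cons_zero] at hx0
  have hPR0 : 0 < P * R := by positivity
  have hx0pos : 0 < x 0 := by linarith [hx0.1]
  -- the ray condition `x₀ = mTR/π` is met at `m = w`; an admissible `m` is taken just above it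
  set w : ℝ := π * x 0 / (R * T) with hw
  have hwpos : 0 < w := by positivity
  obtain ⟨m, hm1, hm2, hm3⟩ := exists_digits q hq
    (fun i => if h : i + 1 < n + 1 then D * x ⟨i + 1, h⟩ else 0) n ⌈w⌉
  have hm1' : 1 ≤ m := le_trans (Int.ceil_pos.2 hwpos) hm1
  have hm1R : (1 : ℝ) ≤ m := by exact_mod_cast hm1'
  have hmw : w ≤ m := Int.ceil_le.1 hm1
  have hmu : (m : ℝ) ≤ w + (q : ℝ) ^ n := by
    have h1 : m + 1 ≤ ⌈w⌉ + (q : ℤ) ^ n := hm2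
    have h2 : (m : ℝ) + 1 ≤ ⌈w⌉ + (q : ℝ) ^ n := by exact_mod_cast h1
    linarith [Int.ceil_lt_add_one w]
  have hqn : (q : ℝ) ^ n ≤ Q ^ n := pow_le_pow_left₀ (by linarith) hqQ n
  have hmQ : (m : ℝ) ≤ w + Q ^ n := hmu.trans (by linarith)
  have hwRT : w * (R * T) = π * x 0 := by rw [hw]; field_simp
  have hwinB : Q ^ n * (R * T) = 1 / B := by
    rw [eq_div_iff hB.ne']; linarith
  have hRT : 0 < R * T := by positivity
  have hlow : π * x 0 ≤ m * T * R := by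
    have := mul_le_mul_of_nonneg_right hmw hRT.le
    linarith
  have hup : m * T * R ≤ π * x 0 + 1 / B := by
    have := mul_le_mul_of_nonneg_right hmQ hRT.le
    linarith
  have hB5 : 1 / B ≤ P * R / 5 := by
    rw [div_le_div_iff₀ hB (by norm_num)]
    calc 1 * 5 = 5 * B * (P * B) := by linarith
      _ ≤ R * (P * B) := by gcongr
      _ = _ := by ring
  -- `π/4 + 1/5 < 1`
  have htP : m * T < P := by
    have : m * T * R < P * R := by nlinarith [hx0.2]
    exact lt_of_mul_lt_mul_right this hR0.le
  have ht0 : 0 ≤ m * T := by positivity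
  have htR : m * T * R ≤ 1 := (mul_le_mul_of_nonneg_right htP.le hR0.le).trans hPR
  refine ⟨m, ⟨by nlinarith, htP⟩, ?_⟩
  refine phase_box (δ := 11 / K) ?_ fun i => ?_
  · rw [hK]
    push_cast
    rw [← mul_div_assoc, div_le_one (by positivity)]
    linarith
  refine Fin.cases ?_ (fun i => ?_) i
  · refine ⟨-x 0 * R + m * T / (2 * π) * R ^ 2, fun ξ hξ => ⟨0, ?_⟩⟩
    simp only [freqFactor, Fin.cons_zero] at hξ
    have := phase_first (t := m * T) (x := x 0) hB hK1 ht0 ?_ ?_ hξ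
    · simp only [Int.cast_zero, mul_zero, sub_zero]
      exact this.trans (by gcongr; norm_num)
    · rw [← hPB]; gcongr
    · have e : x 0 - m * T * R / π = -((m * T * R - π * x 0) / π) := by field_simp; ring
      rw [e, abs_neg, abs_of_nonneg (div_nonneg (by linarith) (by linarith))]
      refine (div_le_self (by linarith) (by linarith)).trans (by linarith)
  · set α : ℝ := 1 / (2 * (q : ℝ) ^ ((i : ℕ) + 1)) with hα
    have hα0 : 0 ≤ α := by positivity
    have hα1 : α ≤ 1 := by
      rw [hα, div_le_one (by positivity)]
      linarith [one_le_pow₀ hqR (n := (i : ℕ) + 1)]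
    obtain ⟨p, hp⟩ := hm3 i i.2
    have hi : (i : ℕ) + 1 < n + 1 := by omega
    rw [dif_pos hi] at hp
    have hsucc : (⟨(i : ℕ) + 1, hi⟩ : Fin (n + 1)) = i.succ := rfl
    rw [hsucc] at hp
    have hxi := hx i.succ
    simp only [spaceFactor, Fin.cons_succ] at hxi
    refine ⟨2 * π * D * α * x i.succ + 2 * π * m * α ^ 2, fun ξ hξ => ?_⟩
    simp only [freqFactor, Fin.cons_succ] at hξ
    refine phase_comb (p := p) hD0 hK1 hα0 hα1 hq hqL ht0 ?_ ?_ ?_ ?_ ?_ hξ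
    · nlinarith
    · linear_combination (m : ℝ) * hDT
    · exact (mul_le_mul_of_nonneg_left hDL ht0).trans htR
    · rw [abs_of_nonneg hxi.1]
      refine hxi.2.trans ?_
      rw [div_le_one (by positivity)]; linarith
    · convert hp using 3
      rw [hα]; field_simp

lemma sobolev_indicator {N : ℕ} {S : Set (EuclideanSpace ℝ (Fin N))} (hS : MeasurableSet S)
    (hfin : volume S ≠ ⊤) {R s : ℝ} (hR : 1 ≤ R) (hs : 0 ≤ s)
    (hSR : S ⊆ Metric.ball 0 (2 * R)) :
    √(sobolevNormSq s (S.indicator fun _ => 1)) ≤ √(5 ^ s) * (R ^ s * √(volume.real S)) := by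
  have h1 : sobolevNormSq s (S.indicator fun _ => 1)
      = ∫ ξ in S, (1 + ‖ξ‖ ^ 2) ^ s := by
    rw [← integral_indicator hS]
    unfold sobolevNormSq
    congr 1
    ext ξ
    by_cases h : ξ ∈ S <;> simp [h]
  have hb : ∀ ξ ∈ S, (1 + ‖ξ‖ ^ 2) ^ s ≤ (5 * R ^ 2) ^ s := by
    intro ξ hξ
    have h2 := hSR hξ
    rw [mem_ball_zero_iff] at h2
    refine Real.rpow_le_rpow (by positivity) ?_ hs
    nlinarith [norm_nonneg ξ]
  have h2 : sobolevNormSq s (S.indicator fun _ => 1) ≤ (5 * R ^ 2) ^ s * volume.real S := by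
    rw [h1]
    have h3 := norm_setIntegral_le_of_norm_le_const (μ := volume) (s := S)
      (f := fun ξ => (1 + ‖ξ‖ ^ 2) ^ s) (C := (5 * R ^ 2) ^ s) hfin.lt_top (fun ξ hξ => by
        rw [Real.norm_of_nonneg (by positivity)]; exact hb ξ hξ)
    exact (le_abs_self _).trans h3
  have e : (R ^ 2) ^ s = (R ^ s) ^ 2 := by
    rw [← Real.rpow_natCast, ← Real.rpow_natCast, ← Real.rpow_mul (by linarith),
      ← Real.rpow_mul (by linarith), mul_comm]
  refine (Real.sqrt_le_sqrt h2).trans (le_of_eq ?_)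
  rw [Real.mul_rpow (by norm_num) (by positivity), e, mul_assoc, Real.sqrt_mul (by positivity),
    Real.sqrt_mul (by positivity), Real.sqrt_sq (by positivity)]

/-- The construction in terms of the quantities `T = R^{-β(r+1)}`, `D = T^{-1/2}`, `Q = R/D`,
`B = R^{β/2}` and `P = R^{-β}`, and the relations between them that matter. -/
lemma construction {n : ℕ} {R T D Q B P K s : ℝ} (hK : K = 100 * ((n : ℝ) + 1)) (hs : 0 ≤ s)
    (hT : 0 < T) (hB : 0 < B) (hP : 0 < P) (hD : 1 ≤ D) (hQ : K ≤ Q) (hDQ : D * Q = R)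
    (hDT : D ^ 2 * T = 1) (hwin : Q ^ n * R * T * B = 1) (hPB : P * B ^ 2 = 1)
    (hPR : P * R ≤ 1) (hBR : 5 * B ≤ R) (j₀ : ℕ) (t : ℕ → ℝ)
    (ht : ∀ x : ℝ, x ∈ Set.Ico T P → (∃ m : ℤ, x = (m : ℝ) * T) →
      ∃ j : ℕ, 1 ≤ j ∧ j ≤ j₀ ∧ t j = x) :
    ∃ fhat : EuclideanSpace ℝ (Fin (n + 1)) → ℂ,
      Integrable (fun ξ : EuclideanSpace ℝ (Fin (n + 1)) => ‖fhat ξ‖ ^ 2) ∧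
      Function.support fhat ⊆ Metric.ball (0 : EuclideanSpace ℝ (Fin (n + 1))) (2 * R) ∧
      (1 / (2 * K * (2 * K ^ 2) ^ n) * √(1 / 8 * (1 / ((n : ℝ) + 1)) ^ n))
          * (√(P * R) * (B * Q ^ n)) ≤
        √(∫ x in Metric.ball (0 : EuclideanSpace ℝ (Fin (n + 1))) 1,
          (⨆ j ∈ Set.Icc 1 j₀, ‖schrodingerEvol fhat (t j / (2 * π)) x‖) ^ 2) ∧
      √(sobolevNormSq s fhat) ≤ √(5 ^ s) * (R ^ s * √(B * Q ^ n)) := by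
  have hn : (0 : ℝ) ≤ n := by positivity
  have hK1 : 1 ≤ K := by rw [hK]; linarith
  have hK0 : 0 < K := by linarith
  have hQ1 : 1 ≤ Q := hK1.trans hQ
  have hR1 : 1 ≤ R := by rw [← hDQ]; nlinarith
  set L : ℕ := ⌊Q / K⌋₊ with hL
  have hQK : 1 ≤ Q / K := (one_le_div hK0).2 hQ
  have hL1 : 1 ≤ L := (Nat.one_le_floor_iff _).2 hQK
  have hLR : (1 : ℝ) ≤ L := by exact_mod_cast hL1
  have hLQ : (L : ℝ) ≤ Q / K := Nat.floor_le (by positivity)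
  have hLQ2 : Q / (2 * K) ≤ L := by
    have h1 : Q / K < L + 1 := Nat.lt_floor_add_one _
    have h2 : Q / (2 * K) = Q / K / 2 := by field_simp
    linarith
  set q : ℕ := 100 * (n + 1) * L with hq
  have hqK : (q : ℝ) = K * L := by rw [hq, hK]; push_cast; ring
  have hq0 : 0 < q := by positivity
  have hKL : K * L ≤ Q := by rw [mul_comm]; exact (le_div_iff₀ hK0).1 hLQ
  have hKDL : K * (D * L) ≤ R := by rw [← hDQ]; nlinarith
  have hDL : D * L ≤ R := by
    refine le_trans ?_ hKDL
    nlinarith [mul_nonneg (by linarith : (0 : ℝ) ≤ D) (by linarith : (0 : ℝ) ≤ L)]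
  set S := coordBox (freqFactor n R B D K q L) with hS
  have hSm : MeasurableSet S := measurableSet_coordBox (measurableSet_freqFactor n R B D K q L)
  have hvol := volume_freq (n := n) (R := R) (q := q) (L := L) hB.le hK1 hD
  rw [← hS] at hvol
  have hfin : volume S ≠ ⊤ := by rw [hvol]; exact ENNReal.ofReal_ne_top
  have hvolR : volume.real S = B / K * (L * (1 / K)) ^ n := by
    rw [measureReal_def, hvol, ENNReal.toReal_ofReal (by positivity)]
  have hSR : S ⊆ Metric.ball 0 (2 * R) := freq_subset hq0 hK hB.le (by linarith) hD hL1 hKDL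
  refine ⟨S.indicator fun _ => 1, ?_, ?_, ?_, ?_⟩
  · have : (fun ξ => ‖S.indicator (fun _ => (1 : ℂ)) ξ‖ ^ 2) = S.indicator fun _ => (1 : ℝ) := by
      ext ξ
      by_cases h : ξ ∈ S <;> simp [h]
    rw [this]
    exact (integrable_indicator_iff hSm).2 (integrableOn_const hfin)
  · exact (Function.support_subset_iff'.2 fun ξ hξ => Set.indicator_of_notMem hξ _).trans hSR
  · have hPR0 : 0 ≤ P * R := by positivity
    have key := sup_lower hSm hfin
      (measurableSet_coordBox (measurableSet_spaceFactor n (P * R))) (space_subset hPR0 hPR) j₀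
      (fun j => t j / (2 * π)) (volume.real S / 2) (by positivity) ?_
    · refine le_trans ?_ key
      rw [volume_space hPR0, hvolR]
      have e : P * R / 8 * (1 / ((n : ℝ) + 1)) ^ n
          = P * R * (1 / 8 * (1 / ((n : ℝ) + 1)) ^ n) := by ring
      rw [e, Real.sqrt_mul hPR0]
      have e2 : 1 / (2 * K * (2 * K ^ 2) ^ n) * (B * Q ^ n)
          = B / K * (Q / (2 * K) * (1 / K)) ^ n / 2 := by
        rw [← div_eq_mul_one_div, div_div, div_pow]
        field_simp
      calc _ = 1 / (2 * K * (2 * K ^ 2) ^ n) * (B * Q ^ n)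
            * (√(P * R) * √(1 / 8 * (1 / ((n : ℝ) + 1)) ^ n)) := by ring
        _ ≤ _ := by
          rw [e2]
          gcongr
    · intro x hx
      obtain ⟨m, hm, c, hc⟩ := exists_time hK hT hB hP hD hR1 hDT hwin hPB hPR hBR hq0
        (by rw [hqK]; exact hKL) hqK.ge hDL hx
      obtain ⟨j, hj1, hj2, hj⟩ := ht _ hm ⟨m, rfl⟩
      refine ⟨j, ⟨hj1, hj2⟩, ?_⟩
      simp only [hj]
      exact evol_lower hSm hfin _ x c hc
  · refine (sobolev_indicator hSm hfin hR1 hs hSR).trans ?_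
    have : volume.real S ≤ B * Q ^ n := by
      rw [hvolR]
      have h1 : (L : ℝ) * (1 / K) ≤ Q := by
        calc (L : ℝ) * (1 / K) ≤ Q / K * (1 / 1) := by gcongr
          _ ≤ Q := by simpa using div_le_self (by linarith) hK1
      have h2 : B / K ≤ B := div_le_self hB.le hK1
      gcongr
    gcongr

/-! ### The exponents -/

theorem counterexample_main_lemma
    (N : ℕ) (hN : 2 ≤ N) (r : ℝ) (hr0 : 0 < r) (hr1 : r ≤ (N : ℝ) / ((N : ℝ) + 1))
    (β : ℝ) (hβ : β = 2 / (((N : ℝ) + 1) / (N : ℝ) * r + 1)) :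
    ∃ ε₀ : ℝ, 0 < ε₀ ∧ ∀ ε : ℝ, 0 < ε → ε < ε₀ → ∀ s : ℝ, 0 ≤ s →
    ∃ c : ℝ, 0 < c ∧ ∃ C : ℝ, 0 < C ∧ ∃ R₀ : ℝ, 1 < R₀ ∧
    ∀ R : ℝ, R₀ ≤ R →
    ∀ (j₀ : ℕ) (t : ℕ → ℝ),
      (∀ j : ℕ, 1 ≤ j → j ≤ j₀ →
        t j ∈ Set.Ico (R ^ (-(β * (r + 1)))) (R ^ (-β)) ∧
          ∃ m : ℤ, t j = (m : ℝ) * R ^ (-(β * (r + 1)))) →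
      (∀ x : ℝ, x ∈ Set.Ico (R ^ (-(β * (r + 1)))) (R ^ (-β)) →
        (∃ m : ℤ, x = (m : ℝ) * R ^ (-(β * (r + 1)))) →
        ∃ j : ℕ, 1 ≤ j ∧ j ≤ j₀ ∧ t j = x) →
      (∀ j : ℕ, 1 ≤ j → j + 1 ≤ j₀ → t j - t (j + 1) = R ^ (-(β * (r + 1)))) →
      ∃ fhat : EuclideanSpace ℝ (Fin N) → ℂ,
        Integrable (fun ξ : EuclideanSpace ℝ (Fin N) => ‖fhat ξ‖ ^ 2) ∧
        Function.support fhat ⊆ Metric.ball (0 : EuclideanSpace ℝ (Fin N)) (2 * R) ∧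
        c * (R ^ ((1 - β) / 2) * R ^ (β / 2) *
            R ^ (((N : ℝ) - 1) * (1 - (r + 1) * β / 2) - ε)) ≤
          Real.sqrt (∫ x in Metric.ball (0 : EuclideanSpace ℝ (Fin N)) 1,
            (⨆ j ∈ Set.Icc 1 j₀, ‖schrodingerEvol fhat (t j / (2 * π)) x‖) ^ 2) ∧
        Real.sqrt (sobolevNormSq s fhat) ≤
          C * (R ^ s * R ^ (β / 4) * R ^ (((N : ℝ) - 1) / 2 * (1 - (r + 1) * β / 2))) := by
  obtain ⟨n, rfl⟩ : ∃ n, N = n + 1 := ⟨N - 1, by omega⟩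
  have hn1 : (1 : ℝ) ≤ n := by exact_mod_cast (by omega : 1 ≤ n)
  set M : ℝ := ((n + 1 : ℕ) : ℝ) with hM
  have hMn : M = n + 1 := by rw [hM]; push_cast; ring
  have hM0 : 0 < M := by linarith
  set g : ℝ := (M + 1) / M * r with hg
  have hg0 : 0 < g := by positivity
  have hg1 : g ≤ 1 := by
    calc g ≤ (M + 1) / M * (M / (M + 1)) := by rw [hg]; gcongr
      _ = 1 := by field_simp
  have hβg : β * (g + 1) = 2 := by rw [hβ]; field_simp
  have hβ0 : 0 < β := by rw [hβ]; positivity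
  have hβ1 : 1 ≤ β := by nlinarith
  have hβ2 : β < 2 := by nlinarith
  have hMg : M * g = (M + 1) * r := by rw [hg]; field_simp
  set κ : ℝ := 1 - (r + 1) * β / 2 with hκ
  have hκM : 2 * M * κ = r * β := by
    rw [hκ]; linear_combination (-M) * hβg + β * hMg
  have hκ0 : 0 < κ := by
    have : 0 < 2 * M * κ := by rw [hκM]; positivity
    exact pos_of_mul_pos_right this (by positivity)
  -- the identity that determines `β`
  have hwinexp : n * κ + 1 + -(β * (r + 1)) + β / 2 = 0 := by
    have : (n : ℝ) = M - 1 := by linarith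
    rw [this]
    have e : κ = 1 - (r + 1) * β / 2 := hκ
    linear_combination hκM / 2 - e
  have hMsub : M - 1 = n := by linarith
  set K : ℝ := 100 * ((n : ℝ) + 1) with hK
  have hK0 : 0 < K := by positivity
  refine ⟨1, one_pos, fun ε hε _ s hs => ?_⟩
  refine ⟨1 / (2 * K * (2 * K ^ 2) ^ n) * √(1 / 8 * (1 / ((n : ℝ) + 1)) ^ n), by positivity,
    √(5 ^ s), by positivity, ?_⟩
  obtain ⟨R₁, hR₁⟩ := eventually_atTop.1 (((tendsto_rpow_atTop hκ0).eventually_ge_atTop K).and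
    ((tendsto_rpow_atTop (by linarith : 0 < 1 - β / 2)).eventually_ge_atTop 5))
  refine ⟨max R₁ 2, by simp, fun R hR j₀ t _ ht _ => ?_⟩
  obtain ⟨hQ, h5⟩ := hR₁ R ((le_max_left _ _).trans hR)
  have hR2 : 2 ≤ R := (le_max_right _ _).trans hR
  have hR1 : 1 ≤ R := by linarith
  have hR0 : 0 < R := by linarith
  have hpow : ∀ a : ℝ, ∀ k : ℕ, (R ^ a) ^ k = R ^ (a * k) := fun a k => by
    rw [Real.rpow_mul hR0.le, Real.rpow_natCast]
  have hsqrt : ∀ a : ℝ, √(R ^ a) = R ^ (a / 2) := fun a => by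
    rw [Real.sqrt_eq_rpow, ← Real.rpow_mul hR0.le]; congr 1; ring
  have hone : ∀ a : ℝ, a = 0 → R ^ a = 1 := fun a ha => by rw [ha, Real.rpow_zero]
  have hPR : R ^ (-β) * R = R ^ (1 - β) := by
    nth_rewrite 2 [← Real.rpow_one R]
    rw [← Real.rpow_add hR0]; congr 1; ring
  have hQn : (R ^ κ) ^ n = R ^ (κ * n) := hpow _ _
  obtain ⟨f, hf1, hf2, hf3, hf4⟩ := construction (n := n) (R := R) (T := R ^ (-(β * (r + 1))))
    (D := R ^ (1 - κ)) (Q := R ^ κ) (B := R ^ (β / 2)) (P := R ^ (-β)) (s := s) hK hs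
    (by positivity) (by positivity) (by positivity)
    (Real.one_le_rpow hR1 (by
      have : 0 < (r + 1) * β / 2 := by positivity
      linarith)) hQ
    (by rw [← Real.rpow_add hR0]; simp)
    (by
      rw [hpow, ← Real.rpow_add hR0]
      apply hone
      rw [hκ]; push_cast; ring)
    (by
      rw [hQn]
      nth_rewrite 2 [← Real.rpow_one R]
      rw [← Real.rpow_add hR0, ← Real.rpow_add hR0, ← Real.rpow_add hR0]
      apply hone
      linarith)
    (by
      rw [hpow, ← Real.rpow_add hR0]
      apply hone
      push_cast; ring)
    (by rw [hPR]; exact Real.rpow_le_one_of_one_le_of_nonpos hR1 (by linarith))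
    (by
      calc 5 * R ^ (β / 2) ≤ R ^ (1 - β / 2) * R ^ (β / 2) := by gcongr
        _ = R := by rw [← Real.rpow_add hR0]; simp)
    j₀ t ht
  refine ⟨f, hf1, hf2, le_trans ?_ hf3, hf4.trans (le_of_eq ?_)⟩
  · rw [hPR, hsqrt, hQn, mul_assoc (R ^ ((1 - β) / 2)), hMsub]
    gcongr
    linarith
  · rw [hQn, Real.sqrt_mul (by positivity), hsqrt, hsqrt, mul_assoc, hMsub]
    congr 3
    · congr 1; ring
    · congr 1; ring
end
end

section
/- Let N ≥ 2, r ∈ (0, N/(N+1)], and β = 2/(((N+1)/N)r + 1). Let (R_n)_{n≥1} be a sequence with R₁ = 2 and R_{n+1}^{-β} ≤ (1/2) R_n^{-β(r+1)} for every n ≥ 1. For each n, let I_n = [R_n^{-β(r+1)}, R_n^{-β}) and let {t_{n_j} : 1 ≤ j ≤ j_n} = R_n^{-β(r+1)}ℤ ∩ I_n. Then for every b > 0, b^r · #{(n,j) : b < t_{n_j} ≤ 2b} ≤ 1; consequently the sequence consisting of all the t_{n_j} (arranged in decreasing order) belongs to ℓ^{r,∞}(ℕ). -/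
/-!
Write `s n = R n ^ (-β)`, so that the `n`-th lattice has mesh `R n ^ (-(β (r + 1))) = s n ^ (r + 1)`
and its points lie in `[s n ^ (r + 1), s n)`. Since `β > 0` and `R 1 = 2`,
`s 1 < 1`, and the recursion `s (n + 1) ≤ s n ^ (r + 1) / 2` keeps all `s n` below `1`.

Every point of a later layer is less than half of every point of an earlier one
(`layer_separation`), so a dyadic window `(b, 2b]` meets at most one layer, say the `n`-th. That
layer contains at most `s n / s n ^ (r + 1) = s n ^ (-r)` points altogether, and `b < s n` when the
window meets it, so `b ^ r` times the count is at most `1` (`dyadic_count_le`).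

For the weak-type bound, let `f b` be the number of points exceeding `b`. Then
`f b ≤ #(b, 2b] + f (2 b)`, so `b ^ r * f b ≤ 1 + 2 ^ (-r) * ((2 b) ^ r * f (2 b))`, while `f b = 0`
for `b ≥ 1`. Induction on the number of doublings needed to exceed `1` bounds `b ^ r * f b` by the
fixed point `1 / (1 - 2 ^ (-r))` of `A = 1 + 2 ^ (-r) * A`.
-/

open MeasureTheory Real Filter

noncomputable section

/-- The points `(n, t)` of the construction: `t` is an integer multiple of `s n ^ (r + 1)` in
`[s n ^ (r + 1), s n)`, for a layer `n ≥ 1`. The layer is recorded to count with multiplicity. -/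
def latticePoints (s : ℕ → ℝ) (r : ℝ) : Set (ℕ × ℝ) :=
  {p | 1 ≤ p.1 ∧ (∃ m : ℤ, p.2 = (m : ℝ) * s p.1 ^ (r + 1)) ∧
    p.2 ∈ Set.Ico (s p.1 ^ (r + 1)) (s p.1)}

section

variable {s : ℕ → ℝ} {r : ℝ}

lemma rpow_add_one_le_self (hr : 0 < r) {x : ℝ} (h0 : 0 < x) (h1 : x < 1) :
    x ^ (r + 1) ≤ x := by
  simpa using Real.rpow_le_rpow_of_exponent_ge h0 h1.le (by linarith : (1 : ℝ) ≤ r + 1)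

lemma scale_lt_one (hr : 0 < r) (hs : ∀ n, 0 < s n) (h1 : s 1 < 1)
    (hrec : ∀ n, 1 ≤ n → s (n + 1) ≤ (1 / 2) * s n ^ (r + 1)) (n : ℕ) (hn : 1 ≤ n) :
    s n < 1 := by
  induction n, hn using Nat.le_induction with
  | base => exact h1
  | succ n hn ih =>
    linarith [hrec n hn, rpow_add_one_le_self hr (hs n) ih, hs n]

/-- All later scales lie below half the mesh of layer `n`. -/
lemma layer_separation (hr : 0 < r) (hs : ∀ n, 0 < s n) (h1 : s 1 < 1)
    (hrec : ∀ n, 1 ≤ n → s (n + 1) ≤ (1 / 2) * s n ^ (r + 1)) {n k : ℕ} (hn : 1 ≤ n)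
    (hk : n + 1 ≤ k) : s k ≤ (1 / 2) * s n ^ (r + 1) := by
  induction k, hk using Nat.le_induction with
  | base => exact hrec n hn
  | succ k hk ih =>
    have := rpow_add_one_le_self hr (hs k) (scale_lt_one hr hs h1 hrec k (by omega))
    linarith [hrec k (by omega), hs k]

lemma dyadic_count_le (hr : 0 < r) (hs : ∀ n, 0 < s n) (h1 : s 1 < 1)
    (hrec : ∀ n, 1 ≤ n → s (n + 1) ≤ (1 / 2) * s n ^ (r + 1)) {b : ℝ} (hb : 0 < b) :
    b ^ r * ((latticePoints s r ∩ {p | b < p.2 ∧ p.2 ≤ 2 * b}).ncard : ℝ) ≤ 1 := by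
  rcases Set.eq_empty_or_nonempty (latticePoints s r ∩ {p | b < p.2 ∧ p.2 ≤ 2 * b}) with
    h | ⟨⟨n, t⟩, ⟨hn, -, hlo, hhi⟩, hbt, htb⟩
  · simp [h]
  dsimp only at hn hlo hhi hbt htb
  have hδ : 0 < s n ^ (r + 1) := Real.rpow_pos_of_pos (hs n) _
  have hM : s n / s n ^ (r + 1) = (s n ^ r)⁻¹ := by
    rw [Real.rpow_add_one (hs n).ne']
    have := (Real.rpow_pos_of_pos (hs n) r).ne'
    have := (hs n).ne'
    field_simp
  set M : ℕ := ⌊s n / s n ^ (r + 1)⌋₊ with hMdef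
  have hsub : latticePoints s r ∩ {p | b < p.2 ∧ p.2 ≤ 2 * b} ⊆
      ((Finset.Icc 1 M).image fun m : ℕ => (n, (m : ℝ) * s n ^ (r + 1)) : Finset (ℕ × ℝ)) := by
    rintro ⟨k, u⟩ ⟨⟨hk, ⟨m, hm⟩, hulo, huhi⟩, hbu, hub⟩
    dsimp only at hk hm hulo huhi hbu hub
    -- A second layer would put a factor larger than 2 between two points of the window.
    obtain rfl : k = n := by
      rcases lt_trichotomy k n with h | h | h
      · linarith [layer_separation hr hs h1 hrec hk h]
      · exact h
      · linarith [layer_separation hr hs h1 hrec hn h]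
    have hm0 : 0 < m := by
      have : (0 : ℝ) < m := by
        by_contra! h
        nlinarith
      exact_mod_cast this
    lift m to ℕ using hm0.le
    push_cast at hm
    simp only [Finset.coe_image, Set.mem_image, Finset.mem_coe, Finset.mem_Icc]
    refine ⟨m, ⟨by exact_mod_cast hm0, Nat.le_floor ?_⟩, by rw [hm]⟩
    rw [le_div_iff₀ hδ]
    linarith
  have hcard : ((latticePoints s r ∩ {p | b < p.2 ∧ p.2 ≤ 2 * b}).ncard : ℝ) ≤ (s n ^ r)⁻¹ := by
    have h2 := Set.ncard_le_ncard hsub (Finset.finite_toSet _)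
    rw [Set.ncard_coe_finset] at h2
    have h3 := h2.trans Finset.card_image_le
    rw [Nat.card_Icc, Nat.add_sub_cancel] at h3
    calc _ ≤ (M : ℝ) := by exact_mod_cast h3
      _ ≤ s n / s n ^ (r + 1) := Nat.floor_le (by have := hs n; positivity)
      _ = _ := hM
  have hsr := Real.rpow_pos_of_pos (hs n) r
  calc _ ≤ s n ^ r * (s n ^ r)⁻¹ :=
        mul_le_mul (Real.rpow_le_rpow hb.le (by linarith) hr.le) hcard (by positivity) hsr.le
    _ = 1 := mul_inv_cancel₀ hsr.ne'

/-- The constant `(1 - 2 ^ (-r))⁻¹` is the sum of the geometric series over dyadic windows. -/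
lemma tail_count_le (hr : 0 < r) (hs : ∀ n, 0 < s n) (h1 : s 1 < 1)
    (hrec : ∀ n, 1 ≤ n → s (n + 1) ≤ (1 / 2) * s n ^ (r + 1)) {b : ℝ} (hb : 0 < b) :
    b ^ r * ((latticePoints s r ∩ {p | b < p.2}).ncard : ℝ) ≤ (1 - 2 ^ (-r))⁻¹ := by
  have hq1 : (2 : ℝ) ^ (-r) < 1 := Real.rpow_lt_one_of_one_lt_of_neg one_lt_two (by linarith)
  obtain ⟨k, hk⟩ := pow_unbounded_of_one_lt (1 / b) one_lt_two
  replace hk : 1 ≤ 2 ^ k * b := by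
    rw [div_lt_iff₀ hb] at hk
    exact hk.le
  induction k generalizing b with
  | zero =>
    have : latticePoints s r ∩ {p | b < p.2} = ∅ := by
      rw [Set.eq_empty_iff_forall_notMem]
      rintro ⟨n, t⟩ ⟨⟨hn, -, -, hhi⟩, hbt⟩
      rw [Set.mem_ofPred_eq] at hbt
      dsimp only at hn hhi hbt
      linarith [scale_lt_one hr hs h1 hrec n hn]
    simp only [this, Set.ncard_empty, Nat.cast_zero, mul_zero]
    exact inv_nonneg.2 (by linarith)
  | succ k ih =>
    have h2 := ih (b := 2 * b) (by linarith) (by rw [pow_succ] at hk; linarith)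
    have hsplit : latticePoints s r ∩ {p | b < p.2} =
        (latticePoints s r ∩ {p | b < p.2 ∧ p.2 ≤ 2 * b}) ∪
          (latticePoints s r ∩ {p | 2 * b < p.2}) := by
      rw [← Set.inter_union_distrib_left]
      congr 1
      ext p
      simp only [Set.mem_ofPred_eq, Set.mem_union]
      constructor
      · intro h
        rcases le_or_gt p.2 (2 * b) with h' | h'
        · exact Or.inl ⟨h, h'⟩
        · exact Or.inr h'
      · rintro (h | h) <;> linarith
    have hunion := Set.ncard_union_le (latticePoints s r ∩ {p | b < p.2 ∧ p.2 ≤ 2 * b})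
      (latticePoints s r ∩ {p | 2 * b < p.2})
    rw [← hsplit] at hunion
    have hunion' : ((latticePoints s r ∩ {p | b < p.2}).ncard : ℝ) ≤
        (latticePoints s r ∩ {p | b < p.2 ∧ p.2 ≤ 2 * b}).ncard +
          (latticePoints s r ∩ {p | 2 * b < p.2}).ncard := by exact_mod_cast hunion
    have hbr : b ^ r = 2 ^ (-r) * (2 * b) ^ r := by
      rw [Real.mul_rpow zero_le_two hb.le, ← mul_assoc, ← Real.rpow_add two_pos]
      simp
    calc _ ≤ b ^ r * (_ + _) :=
          mul_le_mul_of_nonneg_left hunion' (Real.rpow_nonneg hb.le r)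
      _ = b ^ r * (latticePoints s r ∩ {p | b < p.2 ∧ p.2 ≤ 2 * b}).ncard +
          2 ^ (-r) * ((2 * b) ^ r * (latticePoints s r ∩ {p | 2 * b < p.2}).ncard) := by
            rw [mul_add, ← mul_assoc ((2 : ℝ) ^ (-r)), ← hbr]
      _ ≤ 1 + 2 ^ (-r) * (1 - 2 ^ (-r))⁻¹ :=
          add_le_add (dyadic_count_le hr hs h1 hrec hb)
            (mul_le_mul_of_nonneg_left h2 (by positivity))
      _ = (1 - 2 ^ (-r))⁻¹ := by
          have : (1 : ℝ) - 2 ^ (-r) ≠ 0 := by linarith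
          field_simp
          ring

end

theorem constructed_sequence_in_weak_lr
    (N : ℕ) (hN : 2 ≤ N) (r : ℝ) (hr0 : 0 < r) (hr1 : r ≤ (N : ℝ) / ((N : ℝ) + 1))
    (β : ℝ) (hβ : β = 2 / (((N : ℝ) + 1) / (N : ℝ) * r + 1))
    (R : ℕ → ℝ) (hRpos : ∀ n, 0 < R n) (hR1 : R 1 = 2)
    (hRrec : ∀ n : ℕ, 1 ≤ n → R (n + 1) ^ (-β) ≤ (1 / 2) * R n ^ (-(β * (r + 1)))) :
    (∀ b : ℝ, 0 < b →
      b ^ r * (Nat.card {p : ℕ × ℝ | 1 ≤ p.1 ∧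
          (∃ m : ℤ, p.2 = (m : ℝ) * R p.1 ^ (-(β * (r + 1)))) ∧
          p.2 ∈ Set.Ico (R p.1 ^ (-(β * (r + 1)))) (R p.1 ^ (-β)) ∧
          b < p.2 ∧ p.2 ≤ 2 * b} : ℝ) ≤ 1) ∧
    ∃ A : ℝ, ∀ b : ℝ, 0 < b →
      b ^ r * (Nat.card {p : ℕ × ℝ | 1 ≤ p.1 ∧
          (∃ m : ℤ, p.2 = (m : ℝ) * R p.1 ^ (-(β * (r + 1)))) ∧
          p.2 ∈ Set.Ico (R p.1 ^ (-(β * (r + 1)))) (R p.1 ^ (-β)) ∧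
          b < p.2} : ℝ) ≤ A := by
  have hN0 : (0 : ℝ) < N := by exact_mod_cast (by omega : 0 < N)
  have hβ0 : 0 < β := by rw [hβ]; positivity
  have hδ : ∀ n, R n ^ (-(β * (r + 1))) = (R n ^ (-β)) ^ (r + 1) := fun n => by
    rw [← Real.rpow_mul (hRpos n).le, neg_mul]
  simp only [hδ] at hRrec ⊢
  have hs : ∀ n, 0 < R n ^ (-β) := fun n => Real.rpow_pos_of_pos (hRpos n) _
  have h1 : R 1 ^ (-β) < 1 := by
    rw [hR1]
    exact Real.rpow_lt_one_of_one_lt_of_neg one_lt_two (by linarith)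
  refine ⟨fun b hb => ?_, (1 - 2 ^ (-r))⁻¹, fun b hb => ?_⟩
  · convert dyadic_count_le (s := fun n => R n ^ (-β)) hr0 hs h1 hRrec hb using 3
    rw [← Nat.card_coe_set_eq]
    congr 2
    ext p
    simp only [latticePoints, Set.mem_inter_iff, Set.mem_ofPred_eq, and_assoc]
  · convert tail_count_le (s := fun n => R n ^ (-β)) hr0 hs h1 hRrec hb using 3
    rw [← Nat.card_coe_set_eq]
    congr 2
    ext p
    simp only [latticePoints, Set.mem_inter_iff, Set.mem_ofPred_eq, and_assoc]
end
end

section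
/- Let N ≥ 2 and k ≥ 1. There exists a constant C, depending only on N, such that for every f ∈ L²(ℝ^N) with supp f̂ ⊂ {ξ ∈ ℝ^N : 2^{k-1} ≤ |ξ| ≤ 2^{k+1}}, one has ‖ sup_{t ∈ (0, 2^{-2k})} |e^{itΔ}f| ‖_{L²(B(0,1))} ≤ C ‖f‖_{L²(ℝ^N)}. -/
/-!
The time window is so short that the evolution is a uniformly convergent Taylor series in time. If
`|ξ|² ≤ A` on the support of `g` and `0 ≤ t A ≤ 4`, then expanding `e^{it|ξ|²}` gives
`e^{itΔ} g = ∑ₙ (i t A)ⁿ / n! · wₙ`, where `wₙ` is the evolution at time `0` of the profile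
`(|ξ|² / A)ⁿ g`, which is pointwise dominated by `g` and does not depend on `t`
(`hasSum_schrodingerEvol`). By Cauchy–Schwarz with weights `4ⁿ / n!`,
`sup_t |e^{itΔ} g|² ≤ e⁴ ∑ₙ 4ⁿ / n! · |wₙ|²` (`norm_schrodingerEvol_sq_le`), and integrating over the
whole space with Plancherel, `∫ |wₙ|² ≤ (2π)ᴺ ∫ |g|²`
(`lintegral_schrodingerEvol_zero_sq`), gives the estimate with constant `(e⁸ (2π)ᴺ)^{1/2}`.
With `A = 2^{2k+2}` and times below `2^{-2k}` the product `t A` is at most `4`.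

Plancherel is needed for the Fourier *integral* of a function in `L¹ ∩ L²`; it is deduced from the
`L²` isometry by checking that both transforms define the same distribution (`fourier_ae_eq`).
-/

open MeasureTheory Real Filter
noncomputable section


open scoped FourierTransform ENNReal ContDiff SchwartzMap

/-- On `L¹ ∩ L²` the Fourier integral agrees almost everywhere with the `L²` Fourier transform: by
self-adjointness of both, they have the same pairing with every test function. -/
theorem fourier_ae_eq {V : Type*} [NormedAddCommGroup V] [InnerProductSpace ℝ V]
    [FiniteDimensional ℝ V] [MeasurableSpace V] [BorelSpace V] {g : V → ℂ}
    (h1 : Integrable g) (h2 : MemLp g 2) :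
    𝓕 g =ᵐ[volume] ((𝓕 (h2.toLp g) : Lp (α := V) ℂ 2) : V → ℂ) := by
  have hc : Continuous (𝓕 g) :=
    VectorFourier.fourierIntegral_continuous Real.continuous_fourierChar
      (L := innerₗ V) continuous_inner h1
  apply ae_eq_of_integral_contDiff_smul_eq hc.locallyIntegrable
    ((Lp.memLp _).locallyIntegrable one_le_two)
  intro φ φ_smooth φ_cpt
  have hg₁ : HasCompactSupport (Complex.ofRealCLM ∘ φ) := φ_cpt.comp_left rfl
  have hg₂ : ContDiff ℝ ∞ (Complex.ofRealCLM ∘ φ) := by fun_prop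
  set ψ : 𝓢(V, ℂ) := hg₁.toSchwartzMap hg₂ with hψ
  have key := congrArg (fun T => T ψ) (Lp.fourier_toTemperedDistribution_eq (h2.toLp g))
  simp only [TemperedDistribution.fourier_apply, Lp.toTemperedDistribution_apply] at key
  have e1 (F : V → ℂ) : ∫ x, φ x • F x = ∫ x, ψ x • F x := by simp [hψ]
  rw [e1, e1, ← key]
  have e3 : ∫ x, (𝓕 ψ) x • (h2.toLp g : V → ℂ) x = ∫ x, (𝓕 ψ) x • g x := by
    apply integral_congr_ae
    filter_upwards [h2.coeFn_toLp] with x hx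
    rw [hx]
  rw [e3, SchwartzMap.fourier_coe]
  simpa using! (VectorFourier.integral_fourierIntegral_smul_eq_flip (L := innerₗ V)
    continuous_fourierChar continuous_inner ψ.integrable h1).symm

/-- Plancherel's theorem for the Fourier integral of a function in `L¹ ∩ L²`. -/
theorem lintegral_fourier_sq {V : Type*} [NormedAddCommGroup V] [InnerProductSpace ℝ V]
    [FiniteDimensional ℝ V] [MeasurableSpace V] [BorelSpace V] {g : V → ℂ}
    (h1 : Integrable g) (h2 : MemLp g 2) :
    ∫⁻ w, ‖𝓕 g w‖ₑ ^ 2 = ∫⁻ w, ‖g w‖ₑ ^ 2 := by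
  have h := congrArg ENNReal.ofReal (Lp.norm_fourier_eq (h2.toLp g))
  rw [ofReal_norm, ofReal_norm, Lp.enorm_def, Lp.enorm_def,
    ← eLpNorm_congr_ae (fourier_ae_eq h1 h2), eLpNorm_congr_ae h2.coeFn_toLp] at h
  have e (f : V → ℂ) : ∫⁻ w, ‖f w‖ₑ ^ 2 = eLpNorm f 2 volume ^ 2 := by
    have := eLpNorm_nnreal_pow_eq_lintegral (f := f) (μ := volume) (p := 2) two_ne_zero
    simpa using this.symm
  rw [e, e, h]

theorem schrodingerEvol_zero_eq {N : ℕ} (g : EuclideanSpace ℝ (Fin N) → ℂ)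
    (x : EuclideanSpace ℝ (Fin N)) :
    schrodingerEvol g 0 x = 𝓕 g ((-(2 * π)⁻¹) • x) := by
  rw [Real.fourier_eq', schrodingerEvol]
  congr 1 with ξ
  have h : -2 * π * inner ℝ ξ ((-(2 * π)⁻¹) • x) = ∑ i, x i * ξ i := by
    rw [inner_smul_right, PiLp.inner_apply]
    simp only [RCLike.inner_apply, conj_trivial]
    field_simp
  rw [h, smul_eq_mul]
  congr 2
  push_cast
  ring

/-- Plancherel's theorem in the normalisation of `schrodingerEvol`, which carries no factor `2π` in
the phase and hence scales the squared norm by `(2π)ᴺ`. -/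
theorem lintegral_schrodingerEvol_zero_sq {N : ℕ} {g : EuclideanSpace ℝ (Fin N) → ℂ}
    (h1 : Integrable g) (h2 : MemLp g 2) :
    ∫⁻ x, ‖schrodingerEvol g 0 x‖ₑ ^ 2 = ENNReal.ofReal ((2 * π) ^ N) * ∫⁻ ξ, ‖g ξ‖ₑ ^ 2 := by
  have hc : Continuous (𝓕 g) :=
    VectorFourier.fourierIntegral_continuous Real.continuous_fourierChar
      (L := innerₗ (EuclideanSpace ℝ (Fin N))) continuous_inner h1
  simp_rw [schrodingerEvol_zero_eq]
  have hr : (-(2 * π)⁻¹) ≠ 0 := by simp [Real.pi_ne_zero]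
  have hm : Measurable fun w => ‖𝓕 g w‖ₑ ^ 2 := hc.measurable.enorm.pow_const 2
  rw [← lintegral_map (f := fun w => ‖𝓕 g w‖ₑ ^ 2) (g := fun x => (-(2 * π)⁻¹) • x) hm
    (measurable_const_smul _), Measure.map_addHaar_smul volume hr, lintegral_smul_measure,
    lintegral_fourier_sq h1 h2, smul_eq_mul]
  congr 2
  rw [finrank_euclideanSpace_fin, abs_inv, abs_pow, abs_neg, abs_inv, inv_pow, inv_inv,
    abs_of_pos (by positivity)]

/-- The profile `(|ξ|² / A)ⁿ g(ξ)` of the `n`-th Taylor coefficient in time. The normalisation by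
`A` makes it dominated by `g` as soon as `g` lives in `|ξ|² ≤ A`. -/
def taylorProfile {N : ℕ} (A : ℝ) (g : EuclideanSpace ℝ (Fin N) → ℂ) (n : ℕ)
    (ξ : EuclideanSpace ℝ (Fin N)) : ℂ :=
  (((‖ξ‖ ^ 2 / A) ^ n : ℝ) : ℂ) * g ξ

theorem norm_taylorProfile_le {N : ℕ} {A : ℝ} {g : EuclideanSpace ℝ (Fin N) → ℂ} (hA : 0 < A)
    (hg : ∀ ξ, g ξ ≠ 0 → ‖ξ‖ ^ 2 ≤ A) (n : ℕ) (ξ : EuclideanSpace ℝ (Fin N)) :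
    ‖taylorProfile A g n ξ‖ ≤ ‖g ξ‖ := by
  by_cases h : g ξ = 0
  · simp [taylorProfile, h]
  rw [taylorProfile, norm_mul, Complex.norm_real, Real.norm_of_nonneg (by positivity)]
  exact mul_le_of_le_one_left (norm_nonneg _)
    (pow_le_one₀ (by positivity) ((div_le_one hA).2 (hg ξ h)))

theorem aestronglyMeasurable_taylorProfile {N : ℕ} (A : ℝ) {g : EuclideanSpace ℝ (Fin N) → ℂ}
    (h : AEStronglyMeasurable g) (n : ℕ) : AEStronglyMeasurable (taylorProfile A g n) := by
  have : Continuous fun ξ : EuclideanSpace ℝ (Fin N) => (((‖ξ‖ ^ 2 / A) ^ n : ℝ) : ℂ) := by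
    fun_prop
  exact this.aestronglyMeasurable.mul h

theorem norm_schrodingerEvol_le {N : ℕ} (g : EuclideanSpace ℝ (Fin N) → ℂ) (t : ℝ)
    (x : EuclideanSpace ℝ (Fin N)) : ‖schrodingerEvol g t x‖ ≤ ∫ ξ, ‖g ξ‖ := by
  refine (norm_integral_le_integral_norm _).trans_eq ?_
  congr 1 with ξ
  rw [norm_mul, mul_comm Complex.I, Complex.norm_exp_ofReal_mul_I, one_mul]

/-- Taylor expansion of the evolution in time, with the time-dependence confined to the scalar
coefficients. -/
theorem hasSum_schrodingerEvol {N : ℕ} {A t : ℝ} {g : EuclideanSpace ℝ (Fin N) → ℂ}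
    (h1 : Integrable g) (hA : 0 < A) (hg : ∀ ξ, g ξ ≠ 0 → ‖ξ‖ ^ 2 ≤ A)
    (x : EuclideanSpace ℝ (Fin N)) :
    HasSum (fun n : ℕ => (Complex.I * ((t * A : ℝ) : ℂ)) ^ n / (n.factorial : ℂ) *
      schrodingerEvol (taylorProfile A g n) 0 x) (schrodingerEvol g t x) := by
  set c : ℕ → ℂ := fun n => (Complex.I * ((t * A : ℝ) : ℂ)) ^ n / (n.factorial : ℂ) with hc
  set F : ℕ → EuclideanSpace ℝ (Fin N) → ℂ := fun n ξ =>
    c n * (Complex.exp (Complex.I * (((∑ i, x i * ξ i) + (0 : ℝ) * ‖ξ‖ ^ 2 : ℝ) : ℂ)) *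
      taylorProfile A g n ξ) with hF
  have hnc (n : ℕ) : ‖c n‖ = |t * A| ^ n / n.factorial := by
    simp [hc]
  have hFle (n : ℕ) (ξ) : ‖F n ξ‖ ≤ ‖c n‖ * ‖g ξ‖ := by
    rw [hF]
    dsimp only
    rw [norm_mul, norm_mul, mul_comm Complex.I, Complex.norm_exp_ofReal_mul_I, one_mul]
    exact mul_le_mul_of_nonneg_left (norm_taylorProfile_le hA hg n ξ) (norm_nonneg _)
  have hFint (n : ℕ) : Integrable (F n) := by
    refine Integrable.mono' (h1.norm.const_mul ‖c n‖) ?_ (.of_forall (hFle n))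
    have : Continuous fun ξ : EuclideanSpace ℝ (Fin N) =>
        Complex.exp (Complex.I * (((∑ i, x i * ξ i) + (0 : ℝ) * ‖ξ‖ ^ 2 : ℝ) : ℂ)) := by
      fun_prop
    exact (this.aestronglyMeasurable.mul
      (aestronglyMeasurable_taylorProfile A h1.1 n)).const_mul _
  have hsum : Summable fun n => ∫ ξ, ‖F n ξ‖ := by
    refine Summable.of_nonneg_of_le (fun n => integral_nonneg fun _ => norm_nonneg _)
      (fun n => integral_mono (hFint n).norm (h1.norm.const_mul ‖c n‖) (hFle n)) ?_
    simp_rw [integral_const_mul, hnc]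
    exact (Real.summable_pow_div_factorial _).mul_right _
  have key := hasSum_integral_of_summable_integral_norm hFint hsum
  have e1 (n : ℕ) : ∫ ξ, F n ξ = c n * schrodingerEvol (taylorProfile A g n) 0 x := by
    rw [hF]
    dsimp only
    rw [integral_const_mul, schrodingerEvol]
  have e2 : ∫ ξ, ∑' n, F n ξ = schrodingerEvol g t x := by
    rw [schrodingerEvol]
    congr 1 with ξ
    have hexp := (NormedSpace.expSeries_div_hasSum_exp
      (Complex.I * ((t * ‖ξ‖ ^ 2 : ℝ) : ℂ))).mul_right
      (Complex.exp (Complex.I * ((∑ i, x i * ξ i : ℝ) : ℂ)) * g ξ)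
    rw [← Complex.exp_eq_exp_ℂ, ← mul_assoc, ← Complex.exp_add, ← mul_add] at hexp
    have hval : Complex.exp (Complex.I * (((∑ i, x i * ξ i) + t * ‖ξ‖ ^ 2 : ℝ) : ℂ)) * g ξ =
        Complex.exp (Complex.I * (((t * ‖ξ‖ ^ 2 : ℝ) : ℂ) + ((∑ i, x i * ξ i : ℝ) : ℂ))) * g ξ := by
      rw [← Complex.ofReal_add, add_comm]
    rw [hval, ← hexp.tsum_eq]
    congr 1 with n
    have hA' : (A : ℂ) ≠ 0 := by exact_mod_cast hA.ne'
    simp only [hF, hc, taylorProfile, zero_mul, add_zero]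
    push_cast
    simp only [mul_pow, div_pow]
    field_simp
  simp_rw [e1, e2] at key
  exact key

/-- Cauchy–Schwarz applied to the Taylor series; the right-hand side is independent of `t`. -/
theorem norm_schrodingerEvol_sq_le {N : ℕ} {A t : ℝ} {g : EuclideanSpace ℝ (Fin N) → ℂ}
    (h1 : Integrable g) (hA : 0 < A) (hg : ∀ ξ, g ξ ≠ 0 → ‖ξ‖ ^ 2 ≤ A)
    (ht : 0 ≤ t) (htA : t * A ≤ 4) (x : EuclideanSpace ℝ (Fin N))
    (hs : Summable fun n : ℕ => (4 : ℝ) ^ n / n.factorial *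
      ‖schrodingerEvol (taylorProfile A g n) 0 x‖ ^ 2) :
    ‖schrodingerEvol g t x‖ ^ 2 ≤ Real.exp 4 * ∑' n : ℕ, (4 : ℝ) ^ n / n.factorial *
      ‖schrodingerEvol (taylorProfile A g n) 0 x‖ ^ 2 := by
  refine le_of_tendsto' ((hasSum_schrodingerEvol (t := t) h1 hA hg x).norm.pow 2) fun s => ?_
  set w : ℕ → ℂ := fun n => schrodingerEvol (taylorProfile A g n) 0 x
  have hexp : HasSum (fun n : ℕ => (4 : ℝ) ^ n / n.factorial) (Real.exp 4) := by
    rw [Real.exp_eq_exp_ℝ]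
    exact NormedSpace.expSeries_div_hasSum_exp (4 : ℝ)
  calc _ ≤ (∑ n ∈ s, (4 : ℝ) ^ n / n.factorial * ‖w n‖) ^ 2 := by
        gcongr
        refine (norm_sum_le _ _).trans (Finset.sum_le_sum fun n _ => ?_)
        rw [norm_mul]
        gcongr
        simp only [norm_div, norm_pow, norm_mul, Complex.norm_I, one_mul, Complex.norm_real,
          Complex.norm_natCast]
        rw [← norm_mul, Real.norm_of_nonneg (by positivity)]
        gcongr
    _ ≤ (∑ n ∈ s, (4 : ℝ) ^ n / n.factorial) * ∑ n ∈ s, (4 : ℝ) ^ n / n.factorial * ‖w n‖ ^ 2 := by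
        apply Finset.sum_sq_le_sum_mul_sum_of_sq_le_mul
        · intros; positivity
        · intros; positivity
        · intros; exact le_of_eq (by ring)
    _ ≤ _ := by
        gcongr
        · exact sum_le_hasSum s (fun _ _ => by positivity) hexp
        · exact hs.sum_le_tsum s (fun _ _ => by positivity)

/-- The maximal estimate over all of space, for profiles supported in `|ξ|² ≤ A` and times below
`4 / A`. -/
theorem lintegral_sup_schrodingerEvol_sq_le {N : ℕ} {A T : ℝ} {g : EuclideanSpace ℝ (Fin N) → ℂ}
    (h1 : Integrable g) (h2 : MemLp g 2) (hA : 0 < A) (hg : ∀ ξ, g ξ ≠ 0 → ‖ξ‖ ^ 2 ≤ A)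
    (hTA : T * A ≤ 4) :
    ∫⁻ x, ENNReal.ofReal ‖(⨆ t ∈ Set.Ioo (0 : ℝ) T, ‖schrodingerEvol g t x‖) ^ 2‖ ≤
      ENNReal.ofReal (Real.exp 4 * (Real.exp 4 * ((2 * π) ^ N * ∫ ξ, ‖g ξ‖ ^ 2))) := by
  have hexp : HasSum (fun n : ℕ => (4 : ℝ) ^ n / n.factorial) (Real.exp 4) := by
    rw [Real.exp_eq_exp_ℝ]
    exact NormedSpace.expSeries_div_hasSum_exp (4 : ℝ)
  have hp1 (n : ℕ) : Integrable (taylorProfile A g n) :=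
    h1.mono (aestronglyMeasurable_taylorProfile A h1.1 n)
      (.of_forall (norm_taylorProfile_le hA hg n))
  have hp2 (n : ℕ) : MemLp (taylorProfile A g n) 2 :=
    h2.mono (aestronglyMeasurable_taylorProfile A h1.1 n)
      (.of_forall (norm_taylorProfile_le hA hg n))
  set w : ℕ → EuclideanSpace ℝ (Fin N) → ℂ := fun n => schrodingerEvol (taylorProfile A g n) 0
    with hw
  have hwle (n : ℕ) (x) : ‖w n x‖ ≤ ∫ ξ, ‖g ξ‖ :=
    (norm_schrodingerEvol_le _ _ _).trans
      (integral_mono (hp1 n).norm h1.norm (norm_taylorProfile_le hA hg n))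
  have hs (x) : Summable fun n : ℕ => (4 : ℝ) ^ n / n.factorial * ‖w n x‖ ^ 2 := by
    refine Summable.of_nonneg_of_le (fun n => by positivity) (fun n => ?_)
      (hexp.summable.mul_right ((∫ ξ, ‖g ξ‖) ^ 2))
    gcongr
    exact hwle n x
  have hpt (x) : ENNReal.ofReal ‖(⨆ t ∈ Set.Ioo (0 : ℝ) T, ‖schrodingerEvol g t x‖) ^ 2‖ ≤
      ENNReal.ofReal (Real.exp 4) *
        ∑' n : ℕ, ENNReal.ofReal ((4 : ℝ) ^ n / n.factorial) * ‖w n x‖ₑ ^ 2 := by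
    have e : ENNReal.ofReal (Real.exp 4) *
        ∑' n : ℕ, ENNReal.ofReal ((4 : ℝ) ^ n / n.factorial) * ‖w n x‖ₑ ^ 2 =
        ENNReal.ofReal (Real.exp 4 * ∑' n : ℕ, (4 : ℝ) ^ n / n.factorial * ‖w n x‖ ^ 2) := by
      rw [ENNReal.ofReal_mul (by positivity),
        ENNReal.ofReal_tsum_of_nonneg (fun n => by positivity) (hs x)]
      congr 2 with n
      rw [ENNReal.ofReal_mul (by positivity), ENNReal.ofReal_pow (norm_nonneg _), ofReal_norm]
    rw [e]
    apply ENNReal.ofReal_le_ofReal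
    have h0 : 0 ≤ ⨆ t ∈ Set.Ioo (0 : ℝ) T, ‖schrodingerEvol g t x‖ :=
      Real.iSup_nonneg fun t => Real.iSup_nonneg fun _ => norm_nonneg _
    rw [Real.norm_of_nonneg (by positivity)]
    refine (Real.le_sqrt h0 (mul_nonneg (by positivity)
      (tsum_nonneg fun n => by positivity))).1 ?_
    refine Real.iSup_le (fun t => Real.iSup_le (fun ht => ?_) (Real.sqrt_nonneg _))
      (Real.sqrt_nonneg _)
    refine Real.le_sqrt_of_sq_le (norm_schrodingerEvol_sq_le h1 hA hg ht.1.le ?_ x (hs x))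
    exact (mul_le_mul_of_nonneg_right ht.2.le hA.le).trans hTA
  have hwm (n : ℕ) : Measurable fun x => ‖w n x‖ₑ ^ 2 := by
    have hc : Continuous (𝓕 (taylorProfile A g n)) :=
      VectorFourier.fourierIntegral_continuous Real.continuous_fourierChar
        (L := innerₗ (EuclideanSpace ℝ (Fin N))) continuous_inner (hp1 n)
    have : Continuous (w n) := by
      simp only [hw, funext (schrodingerEvol_zero_eq (taylorProfile A g n))]
      exact hc.comp (continuous_const_smul _)
    exact this.measurable.enorm.pow_const 2
  have hwi (n : ℕ) : ∫⁻ x, ‖w n x‖ₑ ^ 2 ≤ ENNReal.ofReal ((2 * π) ^ N * ∫ ξ, ‖g ξ‖ ^ 2) := by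
    rw [hw, lintegral_schrodingerEvol_zero_sq (hp1 n) (hp2 n), ENNReal.ofReal_mul (by positivity),
      ofReal_integral_eq_lintegral_ofReal ((memLp_two_iff_integrable_sq_norm h1.1).1 h2)
        (.of_forall fun _ => by positivity)]
    gcongr with ξ
    rw [ENNReal.ofReal_pow (norm_nonneg _), ofReal_norm]
    gcongr
    exact enorm_le_iff_norm_le.2 (norm_taylorProfile_le hA hg n ξ)
  calc _ ≤ ∫⁻ x, ENNReal.ofReal (Real.exp 4) *
        ∑' n : ℕ, ENNReal.ofReal ((4 : ℝ) ^ n / n.factorial) * ‖w n x‖ₑ ^ 2 := lintegral_mono hpt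
    _ = ENNReal.ofReal (Real.exp 4) *
        ∑' n : ℕ, ENNReal.ofReal ((4 : ℝ) ^ n / n.factorial) * ∫⁻ x, ‖w n x‖ₑ ^ 2 := by
      rw [lintegral_const_mul' _ _ ENNReal.ofReal_ne_top,
        lintegral_tsum fun n => ((hwm n).const_mul _).aemeasurable]
      simp_rw [lintegral_const_mul' _ _ ENNReal.ofReal_ne_top]
    _ ≤ ENNReal.ofReal (Real.exp 4) * ∑' n : ℕ, ENNReal.ofReal ((4 : ℝ) ^ n / n.factorial) *
        ENNReal.ofReal ((2 * π) ^ N * ∫ ξ, ‖g ξ‖ ^ 2) := by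
      gcongr with n
      exact hwi n
    _ = _ := by
      rw [ENNReal.tsum_mul_right,
        ← ENNReal.ofReal_tsum_of_nonneg (fun n => by positivity) hexp.summable, hexp.tsum_eq,
        ← ENNReal.ofReal_mul (by positivity), ← ENNReal.ofReal_mul (by positivity)]

theorem integrable_of_sq_of_bounded_support {N : ℕ} {A : ℝ} {g : EuclideanSpace ℝ (Fin N) → ℂ}
    (h2 : MemLp g 2) (hg : ∀ ξ, g ξ ≠ 0 → ‖ξ‖ ^ 2 ≤ A) : Integrable g := by
  have hsub : Function.support g ⊆ Metric.closedBall 0 (Real.sqrt A) := fun ξ hξ => by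
    rw [mem_closedBall_zero_iff]
    exact Real.le_sqrt_of_sq_le (hg ξ hξ)
  rw [← integrableOn_iff_integrable_of_support_subset hsub]
  have : IsFiniteMeasure (volume.restrict
      (Metric.closedBall (0 : EuclideanSpace ℝ (Fin N)) (Real.sqrt A))) :=
    isFiniteMeasure_restrict.2 measure_closedBall_lt_top.ne
  exact (h2.restrict _).integrable one_le_two

/-- For a profile that is not a.e. measurable the defining integral takes its junk value `0`. -/
theorem schrodingerEvol_eq_zero_of_not_aestronglyMeasurable {N : ℕ}
    {g : EuclideanSpace ℝ (Fin N) → ℂ} (h : ¬ AEStronglyMeasurable g) (t : ℝ)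
    (x : EuclideanSpace ℝ (Fin N)) : schrodingerEvol g t x = 0 := by
  refine integral_undef fun hi => h ?_
  have hc : Continuous fun ξ : EuclideanSpace ℝ (Fin N) =>
      Complex.exp (-(Complex.I * (((∑ i, x i * ξ i) + t * ‖ξ‖ ^ 2 : ℝ) : ℂ))) := by
    fun_prop
  refine (hc.aestronglyMeasurable.mul hi.1).congr (.of_forall fun ξ => ?_)
  simp only [Pi.mul_apply]
  rw [← mul_assoc, ← Complex.exp_add, neg_add_cancel, Complex.exp_zero, one_mul]

theorem uniform_maximal_estimate_very_short_time
    (N : ℕ) (hN : 2 ≤ N) :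
    ∃ C : ℝ, 0 < C ∧ ∀ k : ℝ, 1 ≤ k →
      ∀ fhat : EuclideanSpace ℝ (Fin N) → ℂ,
        Integrable (fun ξ : EuclideanSpace ℝ (Fin N) => ‖fhat ξ‖ ^ 2) →
        (Function.support fhat ⊆
          {ξ : EuclideanSpace ℝ (Fin N) | (2 : ℝ) ^ (k - 1) ≤ ‖ξ‖ ∧ ‖ξ‖ ≤ (2 : ℝ) ^ (k + 1)}) →
        Real.sqrt (∫ x in Metric.ball (0 : EuclideanSpace ℝ (Fin N)) 1,
            (⨆ t ∈ Set.Ioo (0 : ℝ) ((2 : ℝ) ^ (-(2 * k))), ‖schrodingerEvol fhat t x‖) ^ 2) ≤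
          C * Real.sqrt (∫ ξ : EuclideanSpace ℝ (Fin N), ‖fhat ξ‖ ^ 2) := by
  refine ⟨Real.sqrt (Real.exp 4 * (Real.exp 4 * (2 * π) ^ N)), by positivity, ?_⟩
  intro k _ g hg2 hsupp
  set T : ℝ := (2 : ℝ) ^ (-(2 * k)) with hT
  -- On the support `|ξ|² ≤ A`, and `T * A = 4`.
  set A : ℝ := ((2 : ℝ) ^ (k + 1)) ^ 2 with hAdef
  have hA : 0 < A := by positivity
  have hgA : ∀ ξ, g ξ ≠ 0 → ‖ξ‖ ^ 2 ≤ A := fun ξ hξ =>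
    pow_le_pow_left₀ (norm_nonneg _) (hsupp hξ).2 2
  have hTA : T * A ≤ 4 := by
    refine le_of_eq ?_
    rw [hT, hAdef, ← Real.rpow_natCast, ← Real.rpow_mul zero_le_two, ← Real.rpow_add two_pos]
    have : -(2 * k) + (k + 1) * ((2 : ℕ) : ℝ) = ((2 : ℕ) : ℝ) := by push_cast; ring
    rw [this, Real.rpow_natCast]
    norm_num
  rw [← Real.sqrt_mul (by positivity)]
  apply Real.sqrt_le_sqrt
  by_cases hm : AEStronglyMeasurable g
  swap
  · simp only [schrodingerEvol_eq_zero_of_not_aestronglyMeasurable hm, norm_zero,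
      Real.iSup_const_zero]
    simp only [ne_eq, OfNat.ofNat_ne_zero, not_false_eq_true, zero_pow, integral_zero]
    exact mul_nonneg (by positivity) (integral_nonneg fun _ => by positivity)
  have h2 : MemLp g 2 := (memLp_two_iff_integrable_sq_norm hm).2 hg2
  have h1 := integrable_of_sq_of_bounded_support h2 hgA
  -- Bounding through the lower integral avoids any measurability claim about the supremum.
  refine (Real.le_norm_self _).trans ((norm_integral_le_lintegral_norm _).trans ?_)
  refine ENNReal.toReal_le_of_le_ofReal
    (mul_nonneg (by positivity) (integral_nonneg fun _ => by positivity)) ?_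
  refine (setLIntegral_le_lintegral _ _).trans
    ((lintegral_sup_schrodingerEvol_sq_le h1 h2 hA hgA hTA).trans_eq ?_)
  congr 1
  ring
end
end

section
/- Let d ≥ 1 be an integer and let σ ≥ 1 and ρ ≥ 1. Define Ω = (2πσℤ^d ∩ B(0,ρ)) + B(0, 1/1000) ⊂ ℝ^d, and for x ∈ ℝ^d, t > 0 set G(x,t) = ∫_Ω e^{i x·ξ + i (t/(2π)) |ξ|²} dξ. If t satisfies tσ² ∈ ℤ and tρ ≤ 1/1000, then for every x ∈ (σ^{-1}ℤ^d ∩ B(0,2)) + B(0, 1/(1000ρ)) one has |G(x,t)| ≥ |Ω|/2, where |Ω| denotes the Lebesgue measure of Ω. -/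
/-!
Write `x = y + z` with `y ∈ σ⁻¹ℤ^d`, `‖z‖ < 1 / (1000ρ)`, and `ξ = η + ζ` with `η ∈ 2πσℤ^d`,
`‖ζ‖ < 1 / 1000`. The lattice part `⟪y, η⟫ + t / (2π) * ‖η‖²` of the phase lies in `2πℤ`, because
`tσ²` is an integer, and all remaining terms are `O(1 / 1000)` by Cauchy–Schwarz (`phase_near`).
Hence the cosine of the phase is at least `1 / 2` on all of `Ω`, and integrating this bound for the
real part of the integrand gives the claim; no cancellation occurs.
-/

open MeasureTheory Real Filter Pointwise

noncomputable section

/-- The rescaled lattice `cℤ^d` inside `ℝ^d`. -/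
def latticePts (d : ℕ) (c : ℝ) : Set (EuclideanSpace ℝ (Fin d)) :=
  {ξ : EuclideanSpace ℝ (Fin d) | ∀ i : Fin d, ∃ m : ℤ, ξ i = c * (m : ℝ)}

lemma inner_eq_sum_mul {d : ℕ} (x y : EuclideanSpace ℝ (Fin d)) :
    inner ℝ x y = ∑ i, x i * y i := by
  simp [PiLp.inner_apply, mul_comm]

/-- Points of the reciprocal lattices `aℤ^d` and `bℤ^d` with `ab = 2π` pair to a multiple of
`2π`. -/
lemma inner_lattice {d : ℕ} {a b : ℝ} (hab : a * b = 2 * π) {y η : EuclideanSpace ℝ (Fin d)}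
    (hy : y ∈ latticePts d a) (hη : η ∈ latticePts d b) :
    ∃ n : ℤ, inner ℝ y η = n * (2 * π) := by
  choose k hk using hy
  choose m hm using hη
  refine ⟨∑ i, k i * m i, ?_⟩
  rw [inner_eq_sum_mul]
  push_cast
  rw [Finset.sum_mul]
  refine Finset.sum_congr rfl fun i _ => ?_
  rw [hk, hm, ← hab]
  ring

/-- The quadratic part of the phase is a multiple of `2π` at the points of `2πσℤ^d`. -/
lemma normSq_lattice {d : ℕ} {σ t : ℝ} (htσ : ∃ m : ℤ, t * σ ^ 2 = (m : ℝ))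
    {η : EuclideanSpace ℝ (Fin d)} (hη : η ∈ latticePts d (2 * π * σ)) :
    ∃ n : ℤ, t / (2 * π) * ‖η‖ ^ 2 = n * (2 * π) := by
  obtain ⟨M, hM⟩ := htσ
  choose m hm using hη
  refine ⟨M * ∑ i, m i ^ 2, ?_⟩
  rw [← real_inner_self_eq_norm_sq, inner_eq_sum_mul]
  push_cast
  rw [← hM, Finset.mul_sum, Finset.mul_sum, Finset.sum_mul]
  refine Finset.sum_congr rfl fun i _ => ?_
  rw [hm]
  have := Real.pi_pos
  field_simp

/-- Cauchy–Schwarz with upper bounds for the two norms. -/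
lemma abs_inner_le_of_norm_le {d : ℕ} {x y : EuclideanSpace ℝ (Fin d)} {a b : ℝ}
    (hx : ‖x‖ ≤ a) (hy : ‖y‖ ≤ b) : |inner ℝ x y| ≤ a * b :=
  (abs_real_inner_le_norm x y).trans
    (mul_le_mul hx hy (norm_nonneg y) ((norm_nonneg x).trans hx))

/-- At every admissible `x` and every `ξ ∈ Ω` the phase is within distance `1` of `2πℤ`. -/
lemma phase_near {d : ℕ} {σ ρ t : ℝ} (hσ : 1 ≤ σ) (hρ : 1 ≤ ρ) (ht : 0 < t)
    (htσ : ∃ m : ℤ, t * σ ^ 2 = (m : ℝ)) (htρ : t * ρ ≤ 1 / 1000)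
    {y z η ζ : EuclideanSpace ℝ (Fin d)}
    (hy : y ∈ latticePts d σ⁻¹) (hy2 : ‖y‖ ≤ 2) (hz : ‖z‖ ≤ 1 / (1000 * ρ))
    (hη : η ∈ latticePts d (2 * π * σ)) (hηρ : ‖η‖ ≤ ρ) (hζ : ‖ζ‖ ≤ 1 / 1000) :
    ∃ n : ℤ, |inner ℝ (y + z) (η + ζ) + t / (2 * π) * ‖η + ζ‖ ^ 2 - n * (2 * π)| ≤ 1 := by
  have hσ0 : σ ≠ 0 := by positivity
  obtain ⟨n₁, h₁⟩ := inner_lattice (by field_simp) hy hη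
  obtain ⟨n₂, h₂⟩ := normSq_lattice htσ hη
  refine ⟨n₁ + n₂, ?_⟩
  have key : inner ℝ (y + z) (η + ζ) + t / (2 * π) * ‖η + ζ‖ ^ 2 - ((n₁ + n₂ : ℤ) : ℝ) * (2 * π)
      = inner ℝ y ζ + inner ℝ z η + inner ℝ z ζ
        + t / (2 * π) * (2 * inner ℝ η ζ + ‖ζ‖ ^ 2) := by
    rw [norm_add_sq_real, inner_add_left, inner_add_right, inner_add_right, h₁]
    push_cast
    linear_combination h₂
  have hyζ := abs_inner_le_of_norm_le hy2 hζ
  have hzη : |inner ℝ z η| ≤ 1 / 1000 := by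
    refine (abs_inner_le_of_norm_le hz hηρ).trans (le_of_eq ?_)
    field_simp
  have hz' : ‖z‖ ≤ 1 / 1000 := by
    refine hz.trans (one_div_le_one_div_of_le (by norm_num) (by linarith))
  have hzζ := abs_inner_le_of_norm_le hz' hζ
  have hηζ := abs_inner_le_of_norm_le hηρ hζ
  have hζ2 : ‖ζ‖ ^ 2 ≤ 1 := pow_le_one₀ (norm_nonneg ζ) (hζ.trans (by norm_num))
  have hq : |t / (2 * π) * (2 * inner ℝ η ζ + ‖ζ‖ ^ 2)| ≤ 1 / 10 := by
    have h2π : 1 ≤ 2 * π := by linarith [Real.pi_gt_three]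
    have hin : |2 * inner ℝ η ζ + ‖ζ‖ ^ 2| ≤ 2 * ρ := by
      rw [abs_le] at hηζ ⊢
      constructor <;> linarith [hηζ.1, hηζ.2, sq_nonneg ‖ζ‖]
    rw [abs_mul, abs_of_pos (by positivity : 0 < t / (2 * π))]
    calc t / (2 * π) * |2 * inner ℝ η ζ + ‖ζ‖ ^ 2| ≤ t * (2 * ρ) :=
          mul_le_mul (div_le_self ht.le h2π) hin (abs_nonneg _) ht.le
      _ ≤ 1 / 10 := by linarith
  rw [key]
  rw [abs_le] at *
  constructor <;> linarith [hyζ.1, hyζ.2, hzη.1, hzη.2, hzζ.1, hzζ.2, hq.1, hq.2]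

lemma half_le_cos_of_near {θ : ℝ} (h : ∃ n : ℤ, |θ - n * (2 * π)| ≤ 1) :
    1 / 2 ≤ Real.cos θ := by
  obtain ⟨n, hn⟩ := h
  rw [← Real.cos_sub_int_mul_two_pi θ n]
  have h1 := Real.one_sub_sq_div_two_le_cos (x := θ - n * (2 * π))
  have h2 := (sq_le_one_iff_abs_le_one _).2 hn
  linarith

theorem lattice_sum_lower_bound
    (d : ℕ) (hd : 1 ≤ d) (σ ρ : ℝ) (hσ : 1 ≤ σ) (hρ : 1 ≤ ρ)
    (Ω : Set (EuclideanSpace ℝ (Fin d)))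
    (hΩ : Ω = (latticePts d (2 * π * σ) ∩ Metric.ball (0 : EuclideanSpace ℝ (Fin d)) ρ) +
      Metric.ball (0 : EuclideanSpace ℝ (Fin d)) (1 / 1000))
    (G : EuclideanSpace ℝ (Fin d) → ℝ → ℂ)
    (hG : ∀ x t, G x t = ∫ ξ in Ω,
      Complex.exp (Complex.I * (((∑ i, x i * ξ i) + t / (2 * π) * ‖ξ‖ ^ 2 : ℝ) : ℂ)))
    (t : ℝ) (ht : 0 < t) (htσ : ∃ m : ℤ, t * σ ^ 2 = (m : ℝ)) (htρ : t * ρ ≤ 1 / 1000) :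
    ∀ x ∈ (latticePts d σ⁻¹ ∩ Metric.ball (0 : EuclideanSpace ℝ (Fin d)) 2) +
        Metric.ball (0 : EuclideanSpace ℝ (Fin d)) (1 / (1000 * ρ)),
      (volume Ω).toReal / 2 ≤ ‖G x t‖ := by
  rintro x ⟨y, ⟨hy, hy2⟩, z, hz, rfl⟩
  rw [mem_ball_zero_iff] at hy2 hz
  have hopen : IsOpen Ω := hΩ ▸ Metric.isOpen_ball.add_left
  have hfin : volume Ω ≠ ⊤ := by
    have hb : Bornology.IsBounded Ω := by
      rw [hΩ]
      exact (Metric.isBounded_ball.subset Set.inter_subset_right).add Metric.isBounded_ball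
    exact hb.measure_lt_top.ne
  set φ : EuclideanSpace ℝ (Fin d) → ℝ :=
    fun ξ => (∑ i, (y + z) i * ξ i) + t / (2 * π) * ‖ξ‖ ^ 2 with hφ
  have hcos : ∀ ξ ∈ Ω, 1 / 2 ≤ Real.cos (φ ξ) := by
    intro ξ hξ
    rw [hΩ] at hξ
    obtain ⟨η, ⟨hη, hηρ⟩, ζ, hζ, rfl⟩ := hξ
    rw [mem_ball_zero_iff] at hηρ hζ
    apply half_le_cos_of_near
    simp only [hφ, ← inner_eq_sum_mul]
    exact phase_near hσ hρ ht htσ htρ hy hy2.le hz.le hη hηρ.le hζ.le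
  have hre : ∀ ξ, (Complex.exp (Complex.I * (φ ξ : ℂ))).re = Real.cos (φ ξ) := fun ξ => by
    rw [mul_comm, Complex.exp_ofReal_mul_I_re]
  have hint : IntegrableOn (fun ξ => Complex.exp (Complex.I * (φ ξ : ℂ))) Ω := by
    refine Measure.integrableOn_of_bounded (M := 1) hfin ?_ ?_
    · exact Continuous.aestronglyMeasurable (by fun_prop)
    · refine Eventually.of_forall fun ξ => ?_
      rw [mul_comm, Complex.norm_exp_ofReal_mul_I]
  have hG' : G (y + z) t = ∫ ξ in Ω, Complex.exp (Complex.I * (φ ξ : ℂ)) := hG _ _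
  change _ ≤ ‖G (y + z) t‖
  rw [hG']
  calc (volume Ω).toReal / 2 = ∫ _ in Ω, (1 / 2 : ℝ) := by
        rw [setIntegral_const, smul_eq_mul, Measure.real]
        ring
    _ ≤ ∫ ξ in Ω, (Complex.exp (Complex.I * (φ ξ : ℂ))).re := by
        refine setIntegral_mono_on (integrableOn_const hfin) hint.re hopen.measurableSet ?_
        intro ξ hξ
        rw [hre]
        exact hcos ξ hξ
    _ = (∫ ξ in Ω, Complex.exp (Complex.I * (φ ξ : ℂ))).re := integral_re hint
    _ ≤ ‖∫ ξ in Ω, Complex.exp (Complex.I * (φ ξ : ℂ))‖ := Complex.re_le_norm _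
end
end
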